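/- For every integer k ≥ 3 and every δ ∈ (0,1), there exists a constant C such that for all sufficiently large n the following holds: if p ∈ [0,1] satisfies p ≥ C·n^{−1/(k−1)}, then the probability that the p-random subset [n]_p of {1,…,n} is (δ,k)-Szemerédi is at least 1 − 2·exp(−pn/8). -/

import Mathlib

attribute [local instance] Classical.propDecidable

/-- `A` is `(δ,k)`-Szemerédi: every subset `B ⊆ A` with `|B| ≥ δ|A|` contains a
`k`-term arithmetic progression. -/
def IsSzemeredi (δ : ℝ) (k : ℕ) (A : Finset ℕ) : Prop :=
  ∀ B ⊆ A, δ * (A.card : ℝ) ≤ (B.card : ℝ) →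
    ∃ a d : ℕ, 0 < a ∧ 0 < d ∧ ∀ i < k, a + i * d ∈ B

/-- The probability that the `p`-random subset of `{1, …, n}` satisfies `P`. -/
noncomputable def randomSubsetProb (n : ℕ) (p : ℝ) (P : Finset ℕ → Prop) : ℝ :=
  ∑ S ∈ (Finset.Icc 1 n).powerset,
    if P S then p ^ S.card * (1 - p) ^ (n - S.card) else 0

namespace SzR

/-! ### Averages -/

/-- The average of a real function over a finite type. -/
noncomputable def av {X : Type*} (f : X → ℝ) : ℝ := (∑ᶠ x, f x) / (Nat.card X : ℝ)

/-- Indicator of a proposition. -/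
noncomputable def ind (P : Prop) : ℝ := if P then 1 else 0

lemma ind_nonneg (P : Prop) : 0 ≤ ind P := by unfold ind; split_ifs <;> norm_num
lemma ind_le_one (P : Prop) : ind P ≤ 1 := by unfold ind; split_ifs <;> norm_num
lemma ind_true {P : Prop} (h : P) : ind P = 1 := by simp [ind, h]
lemma ind_false {P : Prop} (h : ¬ P) : ind P = 0 := by simp [ind, h]
lemma ind_mono {P Q : Prop} (h : P → Q) : ind P ≤ ind Q := by
  by_cases hp : P
  · rw [ind_true hp, ind_true (h hp)]
  · rw [ind_false hp]; exact ind_nonneg Q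
lemma ind_congr {P Q : Prop} (h : P ↔ Q) : ind P = ind Q := by rw [propext h]
lemma ind_and (P Q : Prop) : ind (P ∧ Q) = ind P * ind Q := by
  by_cases hp : P <;> by_cases hq : Q <;> simp [ind, hp, hq]

section av
variable {X Y : Type*}

lemma av_eq [Fintype X] (f : X → ℝ) : av f = (∑ x, f x) / (Fintype.card X : ℝ) := by
  rw [av, finsum_eq_sum_of_fintype, Nat.card_eq_fintype_card]

lemma av_const [Finite X] [Nonempty X] (c : ℝ) : av (fun _ : X => c) = c := by
  have := Fintype.ofFinite X
  have : (Fintype.card X : ℝ) ≠ 0 := by simp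
  rw [av_eq]; simp

lemma av_add [Finite X] (f g : X → ℝ) : av (fun x => f x + g x) = av f + av g := by
  have := Fintype.ofFinite X
  simp [av_eq, Finset.sum_add_distrib, add_div]

lemma av_sub [Finite X] (f g : X → ℝ) : av (fun x => f x - g x) = av f - av g := by
  have := Fintype.ofFinite X
  simp [av_eq, Finset.sum_sub_distrib, sub_div]

lemma av_mul_left [Finite X] (c : ℝ) (f : X → ℝ) : av (fun x => c * f x) = c * av f := by
  have := Fintype.ofFinite X
  simp [av_eq, ← Finset.mul_sum, mul_div_assoc]

lemma av_mul_right [Finite X] (c : ℝ) (f : X → ℝ) : av (fun x => f x * c) = av f * c := by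
  simp_rw [mul_comm _ c]; exact av_mul_left c f

lemma av_sum [Finite X] {K : Type*} (s : Finset K) (f : K → X → ℝ) :
    av (fun x => ∑ j ∈ s, f j x) = ∑ j ∈ s, av (f j) := by
  have := Fintype.ofFinite X
  simp only [av_eq]
  rw [Finset.sum_comm, Finset.sum_div]

lemma av_mono [Finite X] {f g : X → ℝ} (h : ∀ x, f x ≤ g x) : av f ≤ av g := by
  have := Fintype.ofFinite X
  simp only [av_eq]
  gcongr with x; exact h x

lemma av_nonneg [Finite X] {f : X → ℝ} (h : ∀ x, 0 ≤ f x) : 0 ≤ av f := by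
  have := Fintype.ofFinite X
  simp only [av_eq]
  exact div_nonneg (Finset.sum_nonneg fun x _ => h x) (by positivity)

lemma av_le_const [Finite X] [Nonempty X] {f : X → ℝ} {c : ℝ} (h : ∀ x, f x ≤ c) : av f ≤ c :=
  (av_mono h).trans_eq (av_const c)

lemma const_le_av [Finite X] [Nonempty X] {f : X → ℝ} {c : ℝ} (h : ∀ x, c ≤ f x) : c ≤ av f :=
  (av_const c).symm.trans_le (av_mono h)

lemma abs_av_le [Finite X] (f : X → ℝ) : |av f| ≤ av (fun x => |f x|) := by
  rw [abs_le]; constructor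
  · rw [neg_le]
    calc -av f = av (fun x => (-1) * f x) := by rw [av_mul_left]; ring
      _ ≤ _ := av_mono fun x => by simpa using neg_le_abs (f x)
  · exact av_mono fun x => le_abs_self _

lemma exists_le_av [Finite X] [Nonempty X] (f : X → ℝ) : ∃ x, av f ≤ f x := by
  by_contra! h
  have := Fintype.ofFinite X
  have h2 : ∑ x, f x < ∑ _x : X, av f := Finset.sum_lt_sum_of_nonempty Finset.univ_nonempty
    fun x _ => h x
  have hc : (0 : ℝ) < Fintype.card X := by exact_mod_cast Fintype.card_pos
  rw [av_eq, Finset.sum_const, nsmul_eq_mul, Finset.card_univ] at h2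
  rw [mul_div_cancel₀ _ hc.ne'] at h2
  exact lt_irrefl _ h2

lemma av_comm [Finite X] [Finite Y] (f : X → Y → ℝ) :
    av (fun x => av (fun y => f x y)) = av (fun y => av (fun x => f x y)) := by
  have := Fintype.ofFinite X
  have := Fintype.ofFinite Y
  simp only [av_eq]
  rw [← Finset.sum_div, ← Finset.sum_div, Finset.sum_comm, div_right_comm]

lemma av_prod [Finite X] [Finite Y] (f : X × Y → ℝ) :
    av f = av (fun x => av (fun y => f (x, y))) := by
  have := Fintype.ofFinite X
  have := Fintype.ofFinite Y
  simp only [av_eq]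
  rw [← Finset.sum_div, Fintype.sum_prod_type, Fintype.card_prod, div_div, Nat.cast_mul, mul_comm]

lemma av_equiv (e : X ≃ Y) (f : Y → ℝ) : av (fun x => f (e x)) = av f := by
  unfold av
  rw [Nat.card_congr e, finsum_comp_equiv e]

/-- Markov-type inequality: the average of the indicator of `{f ≥ t}`. -/
lemma av_ind_ge [Finite X] [Nonempty X] {f : X → ℝ} {t : ℝ} (ht : 0 ≤ t) (h1 : ∀ x, f x ≤ 1) :
    av f - t ≤ av (fun x => ind (t ≤ f x)) := by
  have : av f ≤ av (fun x => ind (t ≤ f x) + t) := av_mono fun x => by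
    by_cases h : t ≤ f x
    · rw [ind_true h]; linarith [h1 x]
    · rw [ind_false h]; linarith
  rw [av_add, av_const] at this; linarith

/-- Pigeonhole. -/
lemma av_pigeon [Finite X] [Nonempty X] {K : Type*} [Finite K] [Nonempty K] (P : X → Prop)
    (Q : K → X → Prop) (h : ∀ x, P x → ∃ j, Q j x) :
    ∃ j, av (fun x => ind (P x)) / Nat.card K ≤ av (fun x => ind (Q j x)) := by
  have := Fintype.ofFinite K
  have h1 : av (fun x => ind (P x)) ≤ ∑ j, av (fun x => ind (Q j x)) := by
    rw [← av_sum]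
    refine av_mono fun x => ?_
    by_cases hp : P x
    · obtain ⟨j, hj⟩ := h x hp
      rw [ind_true hp, ← ind_true hj]
      exact Finset.single_le_sum (f := fun j => ind (Q j x)) (fun _ _ => ind_nonneg _)
        (Finset.mem_univ j)
    · rw [ind_false hp]; exact Finset.sum_nonneg fun _ _ => ind_nonneg _
  obtain ⟨j, hj⟩ := exists_le_av (fun j => av (fun x => ind (Q j x)))
  refine ⟨j, le_trans ?_ hj⟩
  rw [av_eq (X := K), Nat.card_eq_fintype_card]
  gcongr

end av

/-! ### Resampling -/

section resample
variable {ι κ β : Type*}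

lemma extend_self {e : κ → ι} (he : Function.Injective e) (z : ι → β) (v : κ → β) :
    Function.extend e (z ∘ e) (Function.extend e v z) = z := by
  funext i
  by_cases h : ∃ a, e a = i
  · obtain ⟨a, rfl⟩ := h; rw [he.extend_apply]; rfl
  · rw [Function.extend_apply' _ _ _ h, Function.extend_apply' _ _ _ h]

/-- The involution behind resampling. -/
noncomputable def swapEquiv (β : Type*) {e : κ → ι} (he : Function.Injective e) :
    ((ι → β) × (κ → β)) ≃ ((ι → β) × (κ → β)) where
  toFun p := (Function.extend e p.2 p.1, p.1 ∘ e)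
  invFun p := (Function.extend e p.2 p.1, p.1 ∘ e)
  left_inv p := by
    ext1
    · exact extend_self he p.1 p.2
    · exact Function.extend_comp he _ _
  right_inv p := by
    ext1
    · exact extend_self he p.1 p.2
    · exact Function.extend_comp he _ _

lemma av_resample [Finite ι] [Finite κ] [Finite β] [Nonempty β] {e : κ → ι}
    (he : Function.Injective e) (F : (ι → β) → ℝ) :
    av F = av (fun z => av (fun v : κ → β => F (Function.extend e v z))) := by
  have h := av_equiv (swapEquiv β he) (fun p => F p.1)
  rw [av_prod, av_prod (fun p => F p.1)] at h
  simp only [swapEquiv, Equiv.coe_fn_mk, av_const] at h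
  exact h.symm

end resample

/-! ### Combinatorial subspaces -/

section sub
variable {ι α η ζ : Type*}

/-- Evaluation of a combinatorial subspace, given by its index map. -/
def ev (V : ι → α ⊕ η) (x : η → α) : ι → α := fun i => Sum.elim id x (V i)

/-- Every wildcard is used. -/
def Proper (V : ι → α ⊕ η) : Prop := ∀ e, ∃ i, V i = Sum.inr e

/-- Composition of index maps. -/
def cmp (V : ι → α ⊕ η) (W : η → α ⊕ ζ) : ι → α ⊕ ζ := fun i => Sum.elim Sum.inl W (V i)

lemma ev_cmp (V : ι → α ⊕ η) (W : η → α ⊕ ζ) (x : ζ → α) : ev (cmp V W) x = ev V (ev W x) := by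
  funext i
  simp only [ev, cmp]
  rcases V i with a | e <;> simp [ev]

lemma Proper.cmp {V : ι → α ⊕ η} {W : η → α ⊕ ζ} (hV : Proper V) (hW : Proper W) :
    Proper (cmp V W) := by
  intro z
  obtain ⟨e, he⟩ := hW z
  obtain ⟨i, hi⟩ := hV e
  exact ⟨i, by simp [SzR.cmp, hi, he]⟩

lemma Proper.inj {V : ι → α ⊕ η} (hV : Proper V) : Function.Injective (ev V) := by
  intro x y h
  funext e
  obtain ⟨i, hi⟩ := hV e
  have := congrFun h i
  simpa [ev, hi] using this

/-- `A` contains a combinatorial subspace with wildcards `η`. -/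
def HasSub (η : Type*) (A : Set (ι → α)) : Prop :=
  ∃ V : ι → α ⊕ η, Proper V ∧ ∀ x, ev V x ∈ A

lemma HasSub.of_pull {V : ι → α ⊕ η} (hV : Proper V) {A : Set (ι → α)}
    (h : HasSub ζ {x | ev V x ∈ A}) : HasSub ζ A := by
  obtain ⟨W, hW, hx⟩ := h
  exact ⟨cmp V W, hV.cmp hW, fun x => by rw [ev_cmp]; exact hx x⟩

/-- Index map of the subspace where coordinates in the range of `e` are free. -/
noncomputable def exV (e : η → ι) (z : ι → α) : ι → α ⊕ η :=
  Function.extend e Sum.inr (fun i => Sum.inl (z i))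

lemma ev_exV {e : η → ι} (he : Function.Injective e) (z : ι → α) (x : η → α) :
    ev (exV e z) x = Function.extend e x z := by
  funext i
  simp only [ev, exV]
  by_cases h : ∃ a, e a = i
  · obtain ⟨a, rfl⟩ := h; rw [he.extend_apply, he.extend_apply]; rfl
  · rw [Function.extend_apply' _ _ _ h, Function.extend_apply' _ _ _ h]; rfl

lemma proper_exV {e : η → ι} (he : Function.Injective e) (z : ι → α) : Proper (exV e z) :=
  fun j => ⟨e j, he.extend_apply _ _ _⟩

lemma exists_sub_le_av [Finite ι] [Finite η] [Finite α] [Nonempty α]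
    (h : Nat.card η ≤ Nat.card ι) (f : (ι → α) → ℝ) :
    ∃ V : ι → α ⊕ η, Proper V ∧ av f ≤ av (fun x => f (ev V x)) := by
  have := Fintype.ofFinite ι
  have := Fintype.ofFinite η
  simp only [Nat.card_eq_fintype_card] at h
  obtain ⟨e⟩ := Function.Embedding.nonempty_of_card_le h
  obtain ⟨z, hz⟩ := exists_le_av (fun z => av (fun v : η → α => f (Function.extend e v z)))
  rw [← av_resample e.injective] at hz
  exact ⟨exV e z, proper_exV e.injective z, by simpa only [ev_exV e.injective] using hz⟩

end sub

/-- Density of a set in a finite type. -/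
noncomputable def dens {X : Type*} (A : Set X) : ℝ := av (fun x => ind (x ∈ A))

lemma dens_nonneg {X : Type*} [Finite X] (A : Set X) : 0 ≤ dens A := av_nonneg fun _ => ind_nonneg _
lemma dens_le_one {X : Type*} [Finite X] [Nonempty X] (A : Set X) : dens A ≤ 1 :=
  av_le_const fun _ => ind_le_one _
lemma dens_mono {X : Type*} [Finite X] {A B : Set X} (h : A ⊆ B) : dens A ≤ dens B :=
  av_mono fun _ => ind_mono fun hx => h hx

/-- The density Hales-Jewett statement. -/
def DHJ (α : Type) : Prop := ∀ δ : ℝ, 0 < δ → ∃ N : ℕ, ∀ (ι : Type) [Finite ι],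
  N ≤ Nat.card ι → ∀ A : Set (ι → α), δ ≤ dens A → HasSub Unit A

/-- The multidimensional density Hales-Jewett statement. -/
def MDHJ (α : Type) : Prop := ∀ (m : ℕ) (δ : ℝ), 0 < δ → ∃ N : ℕ, ∀ (ι : Type) [Finite ι],
  N ≤ Nat.card ι → ∀ A : Set (ι → α), δ ≤ dens A → HasSub (Fin m) A

end SzR

namespace SzR

section
variable {ι κ α η : Type*}
lemma ev_extend {e : κ → ι} (he : Function.Injective e) (f : κ → α ⊕ η) (g : ι → α ⊕ η) (x : η → α) :
    ev (Function.extend e f g) x = Function.extend e (ev f x) (ev g x) := by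
  funext i
  simp only [ev]
  by_cases h : ∃ a, e a = i
  · obtain ⟨a, rfl⟩ := h; rw [he.extend_apply, he.extend_apply]; rfl
  · rw [Function.extend_apply' _ _ _ h, Function.extend_apply' _ _ _ h]; rfl
lemma exists_of_dens_pos {X : Type*} [Finite X] [Nonempty X] {A : Set X} (h : 0 < dens A) :
    ∃ x, x ∈ A := by
  obtain ⟨x, hx⟩ := exists_le_av (fun x => ind (x ∈ A))
  by_contra! h'
  rw [ind_false (h' x)] at hx
  unfold dens at h; linarith
end

theorem mdhj_of_dhj {α : Type} [Finite α] [Nonempty α] (h : DHJ α) : MDHJ α := by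
  intro m
  induction m with
  | zero =>
    intro δ hδ
    refine ⟨0, fun ι _ _ A hA => ?_⟩
    obtain ⟨x, hx⟩ := exists_of_dens_pos (lt_of_lt_of_le hδ hA)
    exact ⟨fun i => Sum.inl (x i), fun e => e.elim0, fun y => hx⟩
  | succ m ih =>
    intro δ hδ
    obtain ⟨N1, hN1⟩ := h (δ / 2) (by positivity)
    have hKpos : (0 : ℝ) < Nat.card (Fin N1 → α ⊕ Unit) := by exact_mod_cast Nat.card_pos
    set δ' := (δ / 2) / Nat.card (Fin N1 → α ⊕ Unit) with hδ'
    have hδ'pos : 0 < δ' := by positivity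
    obtain ⟨N2, hN2⟩ := ih δ' hδ'pos
    refine ⟨N1 + N2, fun ι _ hι A hA => ?_⟩
    have := Fintype.ofFinite ι
    have hc : Fintype.card (Fin N1) ≤ Fintype.card ι := by
      rw [Fintype.card_fin, ← Nat.card_eq_fintype_card]; omega
    obtain ⟨e⟩ := Function.Embedding.nonempty_of_card_le hc
    have he := e.injective
    have h1 : δ / 2 ≤ av (fun z : ι → α =>
        ind (δ / 2 ≤ dens {v : Fin N1 → α | Function.extend e v z ∈ A})) := by
      refine le_trans ?_ (av_ind_ge (by positivity) fun z => dens_le_one _)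
      have : dens A = av (fun z : ι → α => dens {v : Fin N1 → α | Function.extend e v z ∈ A}) := by
        unfold dens; rw [av_resample he]; rfl
      rw [← this]; linarith
    obtain ⟨L, hL⟩ := av_pigeon (fun z : ι → α =>
        δ / 2 ≤ dens {v : Fin N1 → α | Function.extend e v z ∈ A})
        (fun (L : Fin N1 → α ⊕ Unit) z => Proper L ∧ ∀ x, Function.extend e (ev L x) z ∈ A)
        (fun z hz => hN1 (Fin N1) (by simp) _ hz)
    have hL' : δ' ≤ av (fun z : ι → α => ind (Proper L ∧ ∀ x, Function.extend e (ev L x) z ∈ A)) := by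
      refine le_trans ?_ hL
      rw [hδ']; gcongr
    rw [av_resample (κ := {i // i ∉ Set.range e}) Subtype.val_injective] at hL'
    obtain ⟨z0, hz0⟩ := exists_le_av (fun z : ι → α => av (fun v : {i // i ∉ Set.range e} → α =>
      ind (Proper L ∧ ∀ x, Function.extend e (ev L x) (Function.extend Subtype.val v z) ∈ A)))
    replace hz0 := hL'.trans hz0
    have hcard : N2 ≤ Nat.card {i // i ∉ Set.range e} := by
      rw [Nat.card_eq_fintype_card, Fintype.card_subtype_compl]
      have : Fintype.card {x // x ∈ Set.range e} = N1 := by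
        rw [Fintype.card_congr (Equiv.ofInjective e he).symm]; simp
      rw [this, ← Nat.card_eq_fintype_card]; omega
    obtain ⟨V', hV', hx⟩ := hN2 _ hcard {v | Proper L ∧ ∀ x,
      Function.extend e (ev L x) (Function.extend Subtype.val v z0) ∈ A} hz0
    refine ⟨Function.extend e (fun j => (L j).map id (fun _ => 0))
      (Function.extend Subtype.val (fun i => (V' i).map id Fin.succ) (fun i => Sum.inl (z0 i))),
      ?_, ?_⟩
    · intro j
      refine Fin.cases ?_ (fun j => ?_) j
      · obtain ⟨i, hi⟩ := (hx (fun _ => Classical.arbitrary α)).1 ()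
        exact ⟨e i, by rw [he.extend_apply, hi]; rfl⟩
      · obtain ⟨i, hi⟩ := hV' j
        refine ⟨i, ?_⟩
        rw [Function.extend_apply' _ _ _ (fun hh => i.2 hh), Subtype.val_injective.extend_apply, hi]
        rfl
    · intro x
      rw [ev_extend he, ev_extend Subtype.val_injective]
      have := (hx (fun j => x j.succ)).2 (fun _ => x 0)
      convert this using 2
      · funext i; simp only [ev]; rcases L i <;> rfl
      · congr 1
        funext i; simp only [ev]; rcases V' i <;> rfl

end SzR

namespace SzR

section tv
variable {Λ β R Y W α : Type*}

lemma av_snd [Finite R] [Nonempty R] [Finite Y] (f : Y → ℝ) : av (fun p : R × Y => f p.2) = av f := by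
  rw [av_prod]; exact av_const (X := R) (av f)

lemma av_update [Finite R] [Finite Y] [Nonempty Y] (i : R) (F : (R → Y) → ℝ) :
    av F = av (fun z => av (fun c => F (Function.update z i c))) := by
  have he : Function.Injective (fun _ : Unit => i) := fun _ _ _ => rfl
  rw [av_resample he]
  congr 1; funext z
  rw [← av_equiv (Equiv.funUnique Unit Y).symm]
  congr 1; funext c
  congr 1; funext j
  by_cases hj : j = i
  · subst hj
    have := he.extend_apply ((Equiv.funUnique Unit Y).symm c) z ()
    rw [this]; simp [Equiv.funUnique]
  · rw [Function.extend_apply' _ _ _ (by rintro ⟨_, h⟩; exact hj h.symm)]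
    simp [hj]

lemma av_ind_eq [Finite β] [Nonempty β] (b : β) (f : β → ℝ) :
    av (fun c => (Nat.card β : ℝ) * ind (c = b) * f c) = f b := by
  have := Fintype.ofFinite β
  have hc : (Fintype.card β : ℝ) ≠ 0 := by simp
  rw [av_eq, Nat.card_eq_fintype_card, Finset.sum_eq_single b]
  · rw [ind_true rfl]; field_simp
  · intro c _ h; rw [ind_false h]; ring
  · simp

lemma av_abs_sq [Finite Y] [Nonempty Y] (S : Y → ℝ) {c : ℝ} (hc : av (fun z => S z ^ 2) ≤ c) :
    av (fun z => |S z|) ≤ Real.sqrt c := by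
  apply Real.le_sqrt_of_sq_le
  set m := av (fun z => |S z|) with hm
  have h : 0 ≤ av (fun z => (|S z| - m) ^ 2) := av_nonneg fun _ => sq_nonneg _
  have h2 : (fun z => (|S z| - m) ^ 2) = fun z => (S z ^ 2 + m ^ 2) - 2 * m * |S z| := by
    funext z; rw [sub_sq, sq_abs]; ring
  rw [h2, av_sub, av_add, av_const, av_mul_left, ← hm] at h
  nlinarith

/-- Overwriting one random position by a fixed letter hardly changes the uniform measure. -/
lemma tv_one [Finite Λ] [Nonempty Λ] [Finite β] [Nonempty β] (b : β) (f : (Λ → β) → ℝ)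
    (h0 : ∀ x, 0 ≤ f x) (h1 : ∀ x, f x ≤ 1) :
    |av (fun y : Λ × (Λ → β) => f (Function.update y.2 y.1 b)) - av f|
      ≤ Real.sqrt (Nat.card β / Nat.card Λ) := by
  set q : ℝ := (Nat.card β : ℝ) with hq
  have hq1 : 1 ≤ q := by rw [hq]; exact_mod_cast Nat.card_pos
  have hX0 : av (fun c : β => q * ind (c = b) - 1) = 0 := by
    have := av_ind_eq b (fun _ => 1)
    simp only [mul_one] at this
    rw [av_sub, av_const, this]; ring
  have e1 : ∀ i : Λ, av (fun z : Λ → β => f (Function.update z i b)) =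
      av (fun z : Λ → β => q * ind (z i = b) * f z) := by
    intro i
    rw [av_update i (fun z : Λ → β => q * ind (z i = b) * f z)]
    congr 1; funext z
    simp only [Function.update_self]
    rw [av_ind_eq b (fun c => f (Function.update z i c))]
  have e2 : av (fun y : Λ × (Λ → β) => f (Function.update y.2 y.1 b)) - av f =
      av (fun z : Λ → β => f z * av (fun i => q * ind (z i = b) - 1)) := by
    rw [av_prod]
    simp only [e1]
    rw [av_comm, ← av_sub]
    congr 1; funext z
    rw [av_sub, av_const, av_mul_right]; ring
  rw [e2]
  refine (abs_av_le _).trans (le_trans (av_mono (fun z => ?_))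
    (av_abs_sq (fun z : Λ → β => av (fun i => q * ind (z i = b) - 1)) ?_))
  · rw [abs_mul]
    refine mul_le_of_le_one_left (abs_nonneg _) ?_
    rw [abs_of_nonneg (h0 z)]; exact h1 z
  · have e3 : ∀ z : Λ → β, av (fun i => q * ind (z i = b) - 1) ^ 2 =
      av (fun i => av (fun j => (q * ind (z i = b) - 1) * (q * ind (z j = b) - 1))) := by
      intro z
      simp only [av_mul_left]
      rw [av_mul_right]; ring
    simp only [e3]
    rw [av_comm]
    have e4 : ∀ i : Λ, av (fun z : Λ → β =>
        av (fun j => (q * ind (z i = b) - 1) * (q * ind (z j = b) - 1))) ≤ q / Nat.card Λ := by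
      intro i
      rw [av_comm]
      have : ∀ j : Λ, av (fun z : Λ → β => (q * ind (z i = b) - 1) * (q * ind (z j = b) - 1))
          ≤ q * ind (j = i) := by
        intro j
        by_cases hij : j = i
        · subst hij
          rw [ind_true rfl, mul_one]
          rw [av_update j]
          refine av_le_const fun z => ?_
          simp only [Function.update_self]
          have : (fun c : β => (q * ind (c = b) - 1) * (q * ind (c = b) - 1)) =
            fun c => q * ind (c = b) * (q - 1) + -1 * (q * ind (c = b) - 1) := by
            funext c
            by_cases h : c = b
            · rw [ind_true h]; ring
            · rw [ind_false h]; ring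
          rw [this, av_add, av_mul_left, hX0, av_ind_eq b (fun _ => q - 1)]; linarith
        · rw [ind_false hij, mul_zero, av_update i]
          refine av_le_const fun z => ?_
          simp only [Function.update_self, Function.update_of_ne hij]
          rw [av_mul_right, hX0, zero_mul]
      refine (av_mono this).trans ?_
      rw [av_mul_left]
      have hΛ : (Nat.card Λ : ℝ) ≠ 0 := by exact_mod_cast Nat.card_pos.ne'
      have := av_ind_eq i (fun _ => (1 : ℝ) / Nat.card Λ)
      have h3 : (fun c => (Nat.card Λ : ℝ) * ind (c = i) * (1 / Nat.card Λ)) = fun c => ind (c = i) := by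
        funext c; field_simp
      rw [h3] at this
      rw [this]; apply le_of_eq; ring
    exact av_le_const e4

/-- Hybrid argument. -/
lemma hybrid [Finite R] [Finite Y] [Nonempty Y] (φ ψ : R → Y → W) (ε : ℝ)
    (h : ∀ r (f : W → ℝ), (∀ w, 0 ≤ f w) → (∀ w, f w ≤ 1) →
      |av (fun y => f (φ r y)) - av (fun y => f (ψ r y))| ≤ ε)
    (F : (R → W) → ℝ) (h0 : ∀ w, 0 ≤ F w) (h1 : ∀ w, F w ≤ 1) :
    |av (fun y : R → Y => F (fun r => φ r (y r))) - av (fun y : R → Y => F (fun r => ψ r (y r)))|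
      ≤ Nat.card R * ε := by
  have := Fintype.ofFinite R
  have key : ∀ s : Finset R, |av (fun y : R → Y => F (fun r => if r ∈ s then φ r (y r) else ψ r (y r)))
      - av (fun y : R → Y => F (fun r => ψ r (y r)))| ≤ s.card * ε := by
    intro s
    induction s using Finset.induction_on with
    | empty => simp
    | insert r s hr ih =>
      rw [Finset.card_insert_of_notMem hr]
      have step : |av (fun y : R → Y => F (fun r' => if r' ∈ insert r s then φ r' (y r') else ψ r' (y r')))
        - av (fun y : R → Y => F (fun r' => if r' ∈ s then φ r' (y r') else ψ r' (y r')))| ≤ ε := by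
        rw [av_update r, av_update r (fun y : R → Y => F (fun r' => if r' ∈ s then φ r' (y r') else ψ r' (y r'))),
          ← av_sub]
        refine (abs_av_le _).trans (av_le_const fun y => ?_)
        have := h r (fun w => F (Function.update (fun r' => if r' ∈ s then φ r' (y r') else ψ r' (y r')) r w))
          (fun _ => h0 _) (fun _ => h1 _)
        convert this using 6
        · rename_i c
          funext r'
          by_cases hr' : r' = r
          · subst hr'; simp
          · simp [hr']
        · rename_i c
          funext r'
          by_cases hr' : r' = r
          · subst hr'; simp [hr]
          · simp [hr']
      push_cast
      rw [abs_le] at *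
      constructor <;> linarith
  have := key Finset.univ
  simpa [Nat.card_eq_fintype_card] using this

/-- Overwrite in each block the chosen position by the given letter. -/
noncomputable def ow (y : R → Λ × (Λ → β)) (w : R → β) : R → Λ → β :=
  fun r => Function.update (y r).2 (y r).1 (w r)

lemma tv_point [Finite R] [Finite Λ] [Nonempty Λ] [Finite β] [Nonempty β] (w : R → β)
    (F : (R → Λ → β) → ℝ) (h0 : ∀ x, 0 ≤ F x) (h1 : ∀ x, F x ≤ 1) :
    |av (fun y : R → Λ × (Λ → β) => F (ow y w)) - av F|
      ≤ Nat.card R * Real.sqrt (Nat.card β / Nat.card Λ) := by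
  have h := hybrid (R := R) (Y := Λ × (Λ → β)) (W := Λ → β)
    (fun r y => Function.update y.2 y.1 (w r)) (fun r y => y.2) _ (fun r f hf0 hf1 => by
      have := tv_one (w r) f hf0 hf1
      rw [av_snd f]
      exact this) F h0 h1
  have e : av (fun y : R → Λ × (Λ → β) => F (fun r => (y r).2)) = av F := by
    rw [← av_equiv (Equiv.arrowProdEquivProdArrow R (fun _ => Λ) (fun _ => Λ → β)).symm
      (fun y => F (fun r => (y r).2))]
    exact av_snd F
  rw [e] at h
  exact h

/-- Replace the wildcard letter `none` by `some a`. -/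
def Rp {ι : Type*} (a : α) (x : ι → Option α) : ι → Option α := fun i => some ((x i).getD a)

/-- The probability that the line with wildcard set `T` is contained in `A`. -/
noncomputable def gA (A : Set (R → Λ → Option α)) (T : Set R) : ℝ :=
  av (fun y : R → Λ × (Λ → Option α) => ind (∀ a : α,
    (fun r => if r ∈ T then Function.update (y r).2 (y r).1 (some a) else (y r).2) ∈ A))

lemma tv_line [Finite R] [Finite Λ] [Nonempty Λ] [Finite α] (w : R → Option α)
    (A : Set (R → Λ → Option α)) :
    |av (fun y : R → Λ × (Λ → Option α) => ind (∀ a, ow y (Rp a w) ∈ A)) - gA A {r | w r = none}|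
      ≤ Nat.card R * Real.sqrt (Nat.card (Option α) / Nat.card Λ) := by
  obtain ⟨T, hT⟩ : ∃ T : Set R, T = {r | w r = none} := ⟨_, rfl⟩
  rw [← hT]
  have hT' : ∀ r, r ∈ T ↔ w r = none := fun r => by rw [hT]; rfl
  have h := hybrid (R := R) (Y := Λ × (Λ → Option α)) (W := α → Λ → Option α)
    (fun r y a => Function.update y.2 y.1 (some ((w r).getD a)))
    (fun r y a => if r ∈ T then Function.update y.2 y.1 (some a) else y.2)
    (Real.sqrt (Nat.card (Option α) / Nat.card Λ)) (fun r f hf0 hf1 => by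
      rcases hw : w r with _ | c
      · simp only [hT', hw, if_true, Option.getD_none, sub_self, abs_zero]
        exact Real.sqrt_nonneg _
      · have := tv_one (some c) (fun x => f (fun _ => x)) (fun _ => hf0 _) (fun _ => hf1 _)
        simp only [hT', hw, Option.getD_some, reduceCtorEq, if_false]
        rw [av_snd (fun x => f (fun _ => x))]
        exact this)
    (fun v => ind (∀ a, (fun r => v r a) ∈ A)) (fun _ => ind_nonneg _) (fun _ => ind_le_one _)
  exact h

end tv
end SzR

namespace SzR

section ins
variable {ι η α Λ R : Type*}

/-- `D` is insensitive to changing between `none` and `some a` on the coordinates in `J`. -/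
def InsOn (a : α) (J : Set ι) (D : Set (ι → Option α)) : Prop :=
  ∀ x y, (∀ i, i ∉ J → x i = y i) → (∀ i, (x i).getD a = (y i).getD a) → x ∈ D → y ∈ D

lemma InsOn.pull {a : α} {D : Set (ι → Option α)} (h : InsOn a Set.univ D)
    (V : ι → Option α ⊕ η) : InsOn a Set.univ {x | ev V x ∈ D} := by
  intro x y _ hxy hx
  refine h _ _ (fun i hi => absurd (Set.mem_univ i) hi) (fun i => ?_) hx
  simp only [ev]
  rcases V i with b | e
  · rfl
  · exact hxy e

/-- Index map of the overwriting subspace. -/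
noncomputable def owV {β : Type*} (y : R → Λ × (Λ → β)) : R × Λ → β ⊕ R :=
  fun p => if p.2 = (y p.1).1 then Sum.inr p.1 else Sum.inl ((y p.1).2 p.2)

lemma ev_owV {β : Type*} (y : R → Λ × (Λ → β)) (w : R → β) :
    ev (owV y) w = fun p => ow y w p.1 p.2 := by
  funext p
  simp only [ev, owV, ow]
  by_cases h : p.2 = (y p.1).1
  · rw [if_pos h, h]; simp
  · rw [if_neg h, Function.update_of_ne h]; simp

lemma proper_owV {β : Type*} (y : R → Λ × (Λ → β)) : Proper (owV y) :=
  fun r => ⟨(r, (y r).1), by simp [owV]⟩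

lemma av_curry {β : Type*} (F : (R × Λ → β) → ℝ) :
    av (fun x : R → Λ → β => F (fun p => x p.1 p.2)) = av F :=
  av_equiv (Equiv.curry R Λ β).symm F

lemma exists_ell (N q : ℕ) {ε : ℝ} (hε : 0 < ε) :
    ∃ l : ℕ, 0 < l ∧ (N : ℝ) * Real.sqrt (q / l) ≤ ε := by
  obtain ⟨l, hl⟩ := exists_nat_gt ((N : ℝ) ^ 2 * q / ε ^ 2)
  have hl0 : (0 : ℝ) < l := lt_of_le_of_lt (by positivity) hl
  refine ⟨l, by exact_mod_cast hl0, ?_⟩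
  refine abs_le_of_sq_le_sq' ?_ hε.le |>.2
  rw [mul_pow, Real.sq_sqrt (by positivity)]
  rw [div_lt_iff₀ (by positivity)] at hl
  rw [← mul_div_assoc, div_le_iff₀ hl0]; linarith

end ins

theorem ins_sub {α : Type} [Finite α] (hM : MDHJ α) (a : α) (m : ℕ) {η : ℝ} (hη : 0 < η) :
    ∃ M : ℕ, ∀ (ι : Type) [Finite ι], M ≤ Nat.card ι → ∀ D : Set (ι → Option α),
      InsOn a Set.univ D → η ≤ dens D → HasSub (Fin m) D := by
  have : Nonempty α := ⟨a⟩
  obtain ⟨N, hN⟩ := hM m (η / 2) (by positivity)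
  obtain ⟨l, hl, hle⟩ := exists_ell N (Nat.card (Option α)) (half_pos hη)
  have : Nonempty (Fin l) := ⟨⟨0, hl⟩⟩
  refine ⟨N * l, fun ι _ hι D hD hd => ?_⟩
  obtain ⟨V0, hV0, h0⟩ := exists_sub_le_av (α := Option α) (η := Fin N × Fin l) (by simpa using hι)
    (fun x => ind (x ∈ D))
  refine HasSub.of_pull hV0 ?_
  have hD0 := hD.pull V0
  set D0 : Set (Fin N × Fin l → Option α) := {x | ev V0 x ∈ D} with hD0def
  have hd0 : η ≤ dens D0 := hd.trans h0
  set F : (Fin N → Fin l → Option α) → ℝ := fun x => ind ((fun p => x p.1 p.2) ∈ D0) with hF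
  have hFav : av F = dens D0 := av_curry (fun x => ind (x ∈ D0))
  have h1 : ∀ w : Fin N → Option α,
      η / 2 ≤ av (fun y : Fin N → Fin l × (Fin l → Option α) => F (ow y w)) := by
    intro w
    have := tv_point w F (fun _ => ind_nonneg _) (fun _ => ind_le_one _)
    rw [hFav, abs_le] at this
    have := this.1
    have e1 : Nat.card (Fin N) = N := by simp
    have e2 : Nat.card (Fin l) = l := by simp
    rw [e1, e2] at this
    linarith
  have h2 : η / 2 ≤ av (fun u : Fin N → α =>
      av (fun y : Fin N → Fin l × (Fin l → Option α) => F (ow y (fun r => some (u r))))) :=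
    const_le_av fun u => h1 _
  rw [av_comm] at h2
  obtain ⟨y, hy⟩ := exists_le_av (fun y : Fin N → Fin l × (Fin l → Option α) =>
    av (fun u : Fin N → α => F (ow y (fun r => some (u r)))))
  obtain ⟨V1, hV1, hx⟩ := hN (Fin N) (by simp) {u | (ev (owV y) (fun r => some (u r))) ∈ D0} (by
    refine (h2.trans hy).trans_eq ?_
    unfold dens
    congr 1; funext u
    simp only [hF, Set.mem_ofPred_eq, ev_owV])
  refine HasSub.of_pull (proper_owV y) ?_
  have hD1 := hD0.pull (owV y)
  refine ⟨fun i => (V1 i).map some id, fun e => ?_, fun x => ?_⟩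
  · obtain ⟨i, hi⟩ := hV1 e
    exact ⟨i, by simp [hi]⟩
  · refine hD1 _ _ (fun i hi => absurd (Set.mem_univ i) hi) (fun i => ?_) (hx (fun j => (x j).getD a))
    simp only [ev]
    rcases V1 i with b | e <;> simp

section rem
variable {U V : Type*}
lemma av_range [Finite U] [Nonempty U] [Finite V] {g : U → V} (hg : Function.Injective g) (f : V → ℝ) :
    av (fun v => f v * ind (v ∈ Set.range g)) = (Nat.card U / Nat.card V : ℝ) * av (fun u => f (g u)) := by
  have := Fintype.ofFinite U
  have := Fintype.ofFinite V
  have hU : (Fintype.card U : ℝ) ≠ 0 := by simp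
  rw [av_eq, av_eq, Nat.card_eq_fintype_card, Nat.card_eq_fintype_card]
  have : ∑ v, f v * ind (v ∈ Set.range g) = ∑ u, f (g u) := by
    have hm : ∑ u, f (g u) = ∑ v ∈ Finset.univ.map ⟨g, hg⟩, f v := by
      rw [Finset.sum_map]; rfl
    rw [hm]
    symm
    apply Finset.sum_subset_zero_on_sdiff (Finset.subset_univ _)
    · intro x hx
      rw [ind_false, mul_zero]
      rintro ⟨u, rfl⟩
      simp at hx
    · intro x hx
      rw [ind_true, mul_one]
      simp at hx
      exact hx
  rw [this]; field_simp
end rem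

theorem greedy {α : Type} [Finite α] (hM : MDHJ α) (a : α) (d : ℕ) {η : ℝ} (hη : 0 < η) :
    ∃ M : ℕ, ∃ θ : ℝ, 0 < θ ∧ ∀ (ι : Type) [Finite ι] (h : (ι → Option α) → ℝ),
      (∀ x, |h x| ≤ 2) → ∀ (r : ℕ) (J : Finset ι) (D : Set (ι → Option α)), InsOn a J D →
      4 * η < av (fun x => h x * ind (x ∈ D)) → dens D ≤ r * θ → r * M ≤ J.card →
      ∃ V : ι → Option α ⊕ Fin d, Proper V ∧ 0 ≤ av (fun x => h (ev V x)) := by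
  obtain ⟨M, hMM⟩ := ins_sub hM a d hη
  have hK : (0 : ℝ) < Nat.card (Fin M → Option α ⊕ Fin d) := by exact_mod_cast Nat.card_pos
  have hL : (0 : ℝ) < Nat.card (Fin M → Option α) := by exact_mod_cast Nat.card_pos
  have hU : (0 : ℝ) < Nat.card (Fin d → Option α) := by exact_mod_cast Nat.card_pos
  refine ⟨M, (Nat.card (Fin d → Option α) / Nat.card (Fin M → Option α)) *
    (η / Nat.card (Fin M → Option α ⊕ Fin d)), by positivity, ?_⟩
  set θ := (Nat.card (Fin d → Option α) / Nat.card (Fin M → Option α) : ℝ) *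
    (η / Nat.card (Fin M → Option α ⊕ Fin d)) with hθ
  intro ι _ h hh r
  induction r with
  | zero =>
    intro J D _ h1 h2 _
    exfalso
    have : av (fun x => h x * ind (x ∈ D)) ≤ 2 * dens D := by
      unfold dens; rw [← av_mul_left]
      exact av_mono fun x => mul_le_mul_of_nonneg_right (abs_le.1 (hh x)).2 (ind_nonneg _)
    simp at h2; linarith
  | succ r ih =>
    intro J D hD h1 h2 hJ
    have hdens : 2 * η ≤ dens D := by
      have : av (fun x => h x * ind (x ∈ D)) ≤ 2 * dens D := by
        unfold dens; rw [← av_mul_left]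
        exact av_mono fun x => mul_le_mul_of_nonneg_right (abs_le.1 (hh x)).2 (ind_nonneg _)
      linarith
    have hMJ : Fintype.card (Fin M) ≤ Fintype.card J := by
      simp; rw [add_mul] at hJ; omega
    obtain ⟨e0⟩ := Function.Embedding.nonempty_of_card_le hMJ
    set e : Fin M → ι := fun j => (e0 j : ι) with hedef
    have he : Function.Injective e := fun x y hxy => e0.injective (Subtype.ext hxy)
    have heJ : ∀ j, e j ∈ J := fun j => (e0 j).2
    have hslice : ∀ z : ι → Option α, InsOn a Set.univ {v | Function.extend e v z ∈ D} := by
      intro z x y _ hxy hx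
      refine hD _ _ (fun i hi => ?_) (fun i => ?_) hx
      · have : ¬ ∃ j, e j = i := by rintro ⟨j, rfl⟩; exact hi (heJ j)
        rw [Function.extend_apply' _ _ _ this, Function.extend_apply' _ _ _ this]
      · by_cases hi : ∃ j, e j = i
        · obtain ⟨j, rfl⟩ := hi
          rw [he.extend_apply, he.extend_apply]; exact hxy j
        · rw [Function.extend_apply' _ _ _ hi, Function.extend_apply' _ _ _ hi]
    have hP : η ≤ av (fun z : ι → Option α =>
        ind (η ≤ dens {v : Fin M → Option α | Function.extend e v z ∈ D})) := by
      refine le_trans ?_ (av_ind_ge hη.le fun z => dens_le_one _)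
      have : dens D = av (fun z : ι → Option α =>
          dens {v : Fin M → Option α | Function.extend e v z ∈ D}) := by
        unfold dens; rw [av_resample he]; rfl
      rw [← this]; linarith
    obtain ⟨V, hV⟩ := av_pigeon (fun z : ι → Option α =>
        η ≤ dens {v : Fin M → Option α | Function.extend e v z ∈ D})
        (fun (V : Fin M → Option α ⊕ Fin d) z => Proper V ∧ ∀ u, Function.extend e (ev V u) z ∈ D)
        (fun z hz => hMM (Fin M) (by simp) _ (hslice z) hz)
    set Q : (ι → Option α) → Prop := fun z => Proper V ∧ ∀ u, Function.extend e (ev V u) z ∈ D with hQ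
    have hV2 : η / Nat.card (Fin M → Option α ⊕ Fin d) ≤ av (fun z => ind (Q z)) :=
      le_trans (by gcongr) hV
    have hQpos : 0 < av (fun z => ind (Q z)) := lt_of_lt_of_le (by positivity) hV2
    obtain ⟨z1, hz1⟩ := exists_of_dens_pos (A := {z | Q z}) hQpos
    have hVp : Proper V := hz1.1
    by_cases hcase : ∃ z, Q z ∧ 0 ≤ av (fun u => h (Function.extend e (ev V u) z))
    · obtain ⟨z, hz, hz0⟩ := hcase
      refine ⟨Function.extend e V (fun i => Sum.inl (z i)), fun j => ?_, ?_⟩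
      · obtain ⟨i, hi⟩ := hVp j
        exact ⟨e i, by rw [he.extend_apply, hi]⟩
      · simp only [ev_extend he]; exact hz0
    · push Not at hcase
      set B : (ι → Option α) → Prop := fun x => Q x ∧ x ∘ e ∈ Set.range (ev V) with hB
      have hBD : ∀ x, B x → x ∈ D := by
        rintro x ⟨⟨_, hx⟩, u, hu⟩
        have := hx u
        rw [hu] at this
        convert this using 1
        funext i
        by_cases hi : ∃ j, e j = i
        · obtain ⟨j, rfl⟩ := hi; rw [he.extend_apply]; rfl
        · rw [Function.extend_apply' _ _ _ hi]
      have hee : ∀ (v v' : Fin M → Option α) (z : ι → Option α),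
          Function.extend e v (Function.extend e v' z) = Function.extend e v z := by
        intro v v' z; funext i
        by_cases hi : ∃ j, e j = i
        · obtain ⟨j, rfl⟩ := hi; rw [he.extend_apply, he.extend_apply]
        · rw [Function.extend_apply' _ _ _ hi, Function.extend_apply' _ _ _ hi,
            Function.extend_apply' _ _ _ hi]
      have hQe : ∀ v z, Q (Function.extend e v z) ↔ Q z := by
        intro v z; simp only [hQ, hee]
      have hBav : ∀ f : (ι → Option α) → ℝ, av (fun x => f x * ind (B x)) =
          (Nat.card (Fin d → Option α) / Nat.card (Fin M → Option α) : ℝ) *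
            av (fun z => ind (Q z) * av (fun u => f (Function.extend e (ev V u) z))) := by
        intro f
        rw [av_resample he, ← av_mul_left]
        congr 1; funext z
        have : ∀ v, f (Function.extend e v z) * ind (B (Function.extend e v z)) =
            ind (Q z) * (f (Function.extend e v z) * ind (v ∈ Set.range (ev V))) := by
          intro v
          simp only [hB]
          rw [ind_and, ind_congr (hQe v z), Function.extend_comp he]; ring
        simp only [this]
        rw [av_mul_left, av_range hVp.inj (fun v => f (Function.extend e v z))]; ring
      have hsplit : ∀ f : (ι → Option α) → ℝ, av (fun x => f x * ind (x ∈ {x | x ∈ D ∧ ¬ B x})) =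
          av (fun x => f x * ind (x ∈ D)) - av (fun x => f x * ind (B x)) := by
        intro f
        rw [← av_sub]; congr 1; funext x
        by_cases hx : B x
        · rw [ind_true hx, ind_true (hBD x hx), ind_false (fun hh => hh.2 hx)]; ring
        · rw [ind_false hx, ind_congr (Q := x ∈ D) ⟨fun hh => hh.1, fun hh => ⟨hh, hx⟩⟩]; ring
      apply ih (J \ Finset.univ.image e) {x | x ∈ D ∧ ¬ B x}
      · intro x y hxy1 hxy2 hx
        have hcomp : x ∘ e = y ∘ e := by
          funext j
          exact hxy1 (e j) (by simp)
        have hyx : ∀ i, i ∉ (J : Set ι) → x i = y i := by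
          intro i hi
          exact hxy1 i (by simp at hi ⊢; tauto)
        refine ⟨hD x y hyx hxy2 hx.1, fun hBy => hx.2 ⟨⟨hVp, fun u => ?_⟩, ?_⟩⟩
        · refine hD _ _ (fun i hi => ?_) (fun i => ?_) (hBy.1.2 u)
          · have : ¬ ∃ j, e j = i := by rintro ⟨j, rfl⟩; exact hi (heJ j)
            rw [Function.extend_apply' _ _ _ this, Function.extend_apply' _ _ _ this, hyx i hi]
          · by_cases hi : ∃ j, e j = i
            · obtain ⟨j, rfl⟩ := hi
              rw [he.extend_apply, he.extend_apply]
            · rw [Function.extend_apply' _ _ _ hi, Function.extend_apply' _ _ _ hi, hxy2 i]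
        · rw [hcomp]; exact hBy.2
      · rw [hsplit h, hBav h]
        have : (Nat.card (Fin d → Option α) / Nat.card (Fin M → Option α) : ℝ) *
            av (fun z => ind (Q z) * av (fun u => h (Function.extend e (ev V u) z))) ≤ 0 := by
          apply mul_nonpos_of_nonneg_of_nonpos (by positivity)
          apply av_le_const fun z => ?_
          by_cases hz : Q z
          · rw [ind_true hz, one_mul]; exact (hcase z hz).le
          · rw [ind_false hz, zero_mul]
        linarith
      · have h3 := hsplit (fun _ => 1)
        have h4 := hBav (fun _ => 1)
        simp only [one_mul, av_const, mul_one] at h3 h4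
        unfold dens at h2 ⊢
        rw [h3, h4]
        push_cast at h2
        have : θ ≤ (Nat.card (Fin d → Option α) / Nat.card (Fin M → Option α) : ℝ) *
          av (fun z => ind (Q z)) := by rw [hθ]; gcongr
        linarith
      · have h5 : (Finset.univ.image e).card ≤ M := by
          simpa using Finset.card_image_le (s := (Finset.univ : Finset (Fin M))) (f := e)
        have := Finset.le_card_sdiff (Finset.univ.image e) J
        rw [add_mul] at hJ; omega

theorem ins_incr {α : Type} [Finite α] (hM : MDHJ α) (a : α) (d : ℕ) {κ : ℝ} (hκ : 0 < κ) :
    ∃ N : ℕ, ∀ (ι : Type) [Finite ι], N ≤ Nat.card ι → ∀ (f : (ι → Option α) → ℝ),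
      (∀ x, |f x| ≤ 1) → ∀ D : Set (ι → Option α), InsOn a Set.univ D →
      κ ≤ av (fun x => f x * ind (x ∈ D)) →
      ∃ V : ι → Option α ⊕ Fin d, Proper V ∧ κ / 2 ≤ av (fun x => f (ev V x)) := by
  obtain ⟨M, θ, hθ, hg⟩ := greedy hM a d (η := κ / 16) (by positivity)
  obtain ⟨r, hr⟩ := exists_nat_gt (1 / θ)
  refine ⟨r * M, fun ι _ hι f hf D hD hav => ?_⟩
  have := Fintype.ofFinite ι
  have hκ1 : κ ≤ 1 := by
    refine hav.trans (av_le_const fun x => ?_)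
    have h1 := (abs_le.1 (hf x)).2
    have h2 := ind_le_one (x ∈ D)
    have h3 := ind_nonneg (x ∈ D)
    nlinarith
  obtain ⟨V, hV, h0⟩ := hg ι (fun x => f x - κ / 2) (fun x => by
      have := abs_le.1 (hf x)
      rw [abs_le]; constructor <;> linarith) r Finset.univ D (by simpa using hD) (by
      have : av (fun x => (f x - κ / 2) * ind (x ∈ D)) =
          av (fun x => f x * ind (x ∈ D)) - κ / 2 * dens D := by
        unfold dens; rw [← av_mul_left, ← av_sub]; congr 1; funext x; ring
      rw [this]
      have := dens_le_one D
      nlinarith) (by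
      refine (dens_le_one D).trans ?_
      rw [div_lt_iff₀ hθ] at hr; exact hr.le) (by
      rw [Finset.card_univ, ← Nat.card_eq_fintype_card]; exact hι)
  refine ⟨V, hV, ?_⟩
  rw [av_sub, av_const] at h0; linarith

theorem multi_incr {α : Type} [Finite α] (hM : MDHJ α) (s : Finset α) :
    ∀ (d : ℕ) (κ : ℝ), 0 < κ →
    ∃ N : ℕ, ∀ (ι : Type) [Finite ι], N ≤ Nat.card ι → ∀ (f : (ι → Option α) → ℝ),
      (∀ x, |f x| ≤ 1) → ∀ E : α → Set (ι → Option α), (∀ a ∈ s, InsOn a Set.univ (E a)) →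
      κ ≤ av (fun x => f x * ind (∀ a ∈ s, x ∈ E a)) →
      ∃ V : ι → Option α ⊕ Fin d, Proper V ∧ κ / 2 ^ s.card ≤ av (fun x => f (ev V x)) := by
  induction s using Finset.induction_on with
  | empty =>
    intro d κ _
    refine ⟨d, fun ι _ hι f _ E _ hav => ?_⟩
    obtain ⟨V, hV, h⟩ := exists_sub_le_av (η := Fin d) (by simpa using hι) f
    refine ⟨V, hV, ?_⟩
    simp [ind] at hav ⊢
    exact hav.trans h
  | insert a s ha ih =>
    intro d κ hκ
    obtain ⟨N', hN'⟩ := ih d (κ / 2) (by positivity)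
    obtain ⟨N, hN⟩ := ins_incr hM a N' hκ
    refine ⟨N, fun ι _ hι f hf E hE hav => ?_⟩
    obtain ⟨V, hV, h1⟩ := hN ι hι (fun x => f x * ind (∀ a ∈ s, x ∈ E a)) (fun x => by
        rw [abs_mul, abs_of_nonneg (ind_nonneg _)]
        exact mul_le_one₀ (hf x) (ind_nonneg _) (ind_le_one _)) (E a) (hE a (by simp)) (by
        refine hav.trans_eq ?_
        congr 1; funext x
        rw [mul_assoc, ← ind_and]; congr 1
        apply ind_congr; simp; tauto)
    obtain ⟨W, hW, h2⟩ := hN' (Fin N') (by simp) (fun x => f (ev V x)) (fun x => hf _)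
      (fun a => {x | ev V x ∈ E a}) (fun b hb => (hE b (by simp [hb])).pull V) h1
    refine ⟨cmp V W, hV.cmp hW, ?_⟩
    simp only [ev_cmp]
    refine le_trans (le_of_eq ?_) h2
    rw [Finset.card_insert_of_notMem ha, pow_succ]
    field_simp

end SzR

namespace SzR

section blocks
variable {α R Λ η : Type*}

/-- Word obtained from a block structure. -/
def bw {β : Type*} (b0 : β) (blk : R → Option η) (x : η → β) : R → β :=
  fun r => (blk r).elim b0 x

/-- Index map of the block structure. -/
def bV {β : Type*} (b0 : β) (blk : R → Option η) : R → β ⊕ η :=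
  fun r => (blk r).elim (Sum.inl b0) Sum.inr

lemma ev_bV {β : Type*} (b0 : β) (blk : R → Option η) (x : η → β) :
    ev (bV b0 blk) x = bw b0 blk x := by
  funext r
  simp only [ev, bV, bw]
  rcases blk r with _ | j <;> simp

lemma proper_bV {β : Type*} (b0 : β) {blk : R → Option η} (h : ∀ j, ∃ r, blk r = some j) :
    Proper (bV b0 blk) := fun j => by
  obtain ⟨r, hr⟩ := h j
  exact ⟨r, by simp [bV, hr]⟩

lemma bw_Rp (a0 a : α) (blk : R → Option η) (x : η → Option α) :
    bw (some a0) blk (Rp a x) = Rp a (bw (some a0) blk x) := by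
  funext r
  simp only [bw, Rp]
  rcases blk r with _ | j <;> simp [Rp]

/-- union of blocks -/
def ub (blk : R → Option η) (T : Set η) : Set R := {r | ∃ j ∈ T, blk r = some j}

lemma ub_bw (a0 : α) (blk : R → Option η) (x : η → Option α) :
    {r | bw (some a0) blk x r = none} = ub blk {j | x j = none} := by
  ext r
  simp only [bw, ub, Set.mem_ofPred_eq]
  rcases h : blk r with _ | j <;> simp

end blocks

theorem line_lb {α : Type} [Finite α] [Nonempty α] (hD : DHJ α) {δ : ℝ} (hδ : 0 < δ) :
    ∃ m0 : ℕ, ∃ c : ℝ, 0 < c ∧ ∀ (R Λ : Type) [Finite R] [Finite Λ] [Nonempty Λ]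
      (A : Set (R → Λ → Option α)), δ ≤ dens A →
      (Nat.card R * Real.sqrt (Nat.card (Option α) / Nat.card Λ) ≤ c) →
      ∀ blk : R → Option (Fin m0), ∃ T : Set (Fin m0), T.Nonempty ∧ c ≤ gA A (ub blk T) := by
  obtain ⟨m0, hm0⟩ := hD (δ / 4) (by positivity)
  have hK : (0 : ℝ) < Nat.card (Fin m0 → α ⊕ Unit) := by exact_mod_cast Nat.card_pos
  refine ⟨m0, min (δ / 4) (δ / 4 / Nat.card (Fin m0 → α ⊕ Unit)), by positivity, ?_⟩
  intro R Λ _ _ _ A hA hε blk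
  set ε := Nat.card R * Real.sqrt (Nat.card (Option α) / Nat.card Λ) with hεdef
  have hε1 := hε.trans (min_le_left _ _)
  have hε2 := hε.trans (min_le_right _ _)
  obtain ⟨a0⟩ := ‹Nonempty α›
  have : Nonempty α := ⟨a0⟩
  set W : (Fin m0 → α) → R → Option α := fun u => bw (some a0) blk (fun j => some (u j)) with hW
  have h1 : 3 * δ / 4 ≤ av (fun y : R → Λ × (Λ → Option α) => dens {u | ow y (W u) ∈ A}) := by
    unfold dens
    rw [av_comm]
    refine const_le_av fun u => ?_
    have := tv_point (W u) (fun x => ind (x ∈ A)) (fun _ => ind_nonneg _) (fun _ => ind_le_one _)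
    have := (abs_le.1 this).1
    unfold dens at hA
    simp only [Set.mem_ofPred_eq]
    linarith
  have h2 : δ / 2 ≤ av (fun y : R → Λ × (Λ → Option α) =>
      ind (δ / 4 ≤ dens {u | ow y (W u) ∈ A})) := by
    refine le_trans ?_ (av_ind_ge (by positivity) fun _ => dens_le_one _)
    linarith
  obtain ⟨L, hL⟩ := av_pigeon (fun y : R → Λ × (Λ → Option α) => δ / 4 ≤ dens {u | ow y (W u) ∈ A})
    (fun (L : Fin m0 → α ⊕ Unit) y => Proper L ∧ ∀ x, ow y (W (ev L x)) ∈ A)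
    (fun y hy => hm0 (Fin m0) (by simp) _ hy)
  have hL2 : δ / 2 / Nat.card (Fin m0 → α ⊕ Unit) ≤ _ := le_trans (by gcongr) hL
  obtain ⟨y1, hy1⟩ := exists_of_dens_pos (A := {y : R → Λ × (Λ → Option α) |
    Proper L ∧ ∀ x, ow y (W (ev L x)) ∈ A}) (lt_of_lt_of_le (by positivity) hL2)
  set z : Fin m0 → Option α := fun j => Sum.elim some (fun _ => none) (L j) with hz
  have hRz : ∀ a, Rp a z = fun j => some (ev L (fun _ => a) j) := by
    intro a; funext j
    simp only [Rp, hz, ev]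
    rcases L j with b | b <;> simp
  refine ⟨{j | z j = none}, ?_, ?_⟩
  · obtain ⟨j, hj⟩ := hy1.1 ()
    exact ⟨j, by simp [hz, hj]⟩
  · rw [← ub_bw a0]
    have h3 := (abs_le.1 (tv_line (bw (some a0) blk z) A)).2
    have h4 : av (fun y : R → Λ × (Λ → Option α) => ind (Proper L ∧ ∀ x, ow y (W (ev L x)) ∈ A)) ≤
        av (fun y : R → Λ × (Λ → Option α) => ind (∀ a, ow y (Rp a (bw (some a0) blk z)) ∈ A)) := by
      refine av_mono fun y => ind_mono fun h a => ?_
      rw [← bw_Rp, hRz]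
      exact h.2 _
    refine (min_le_right _ _).trans ?_
    have : δ / 2 / Nat.card (Fin m0 → α ⊕ Unit) = 2 * (δ / 4 / Nat.card (Fin m0 → α ⊕ Unit)) := by
      ring
    linarith

section perm

lemma exists_perm_image {R : Type*} [Finite R] {S S' : Set R} (h : S.ncard = S'.ncard) :
    ∃ τ : Equiv.Perm R, τ '' S = S' := by
  have := Fintype.ofFinite R
  have hc : Fintype.card {x // x ∈ S} = Fintype.card {x // x ∈ S'} := by
    rw [← Nat.card_eq_fintype_card, ← Nat.card_eq_fintype_card]; exact h
  obtain ⟨e⟩ := Fintype.card_eq.1 hc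
  refine ⟨e.extendSubtype, ?_⟩
  ext r
  constructor
  · rintro ⟨s, hs, rfl⟩
    exact e.extendSubtype_mem s hs
  · intro hr
    refine ⟨e.extendSubtype.symm r, ?_, by simp⟩
    by_contra hn
    have := e.extendSubtype_not_mem _ hn
    simp at this
    exact this hr

lemma av_perm_image {R : Type*} [Finite R] (g : Set R → ℝ) {S S' : Set R} (h : S.ncard = S'.ncard) :
    av (fun σ : Equiv.Perm R => g (σ '' S)) = av (fun σ : Equiv.Perm R => g (σ '' S')) := by
  obtain ⟨τ, rfl⟩ := exists_perm_image h
  rw [← av_equiv (Equiv.mulRight τ) (fun σ : Equiv.Perm R => g (σ '' S))]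
  congr 1; funext σ
  simp [Set.image_image]

/-- Blocks of size `b`. -/
def blkOf (N m b : ℕ) : Fin N → Option (Fin m) :=
  fun r => if h : r.val / b < m then some ⟨r.val / b, h⟩ else none

lemma blkOf_eq {N m b : ℕ} (r : Fin N) (j : Fin m) : blkOf N m b r = some j ↔ r.val / b = j := by
  unfold blkOf
  split_ifs with h
  · simp [Fin.ext_iff]
  · simp; intro h'; exact h (h' ▸ j.2)

lemma ncard_ub {N m b : ℕ} (hb : 0 < b) (hN : m * b ≤ N) (T : Finset (Fin m)) :
    (ub (blkOf N m b) T).ncard = T.card * b := by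
  have hlt : ∀ p : Fin m × Fin b, p.1.val * b + p.2.val < N := by
    rintro ⟨j, i⟩
    have h1 := j.2; have h2 := i.2
    have : (j.val + 1) * b ≤ m * b := Nat.mul_le_mul_right _ h1
    simp only
    rw [add_mul] at this; omega
  have hdiv : ∀ p : Fin m × Fin b, (p.1.val * b + p.2.val) / b = p.1 := by
    rintro ⟨j, i⟩
    simp only
    rw [mul_comm, Nat.mul_add_div hb, Nat.div_eq_of_lt i.2, add_zero]
  have : ub (blkOf N m b) T = ((T ×ˢ (Finset.univ : Finset (Fin b))).image
      (fun p => (⟨p.1.val * b + p.2.val, hlt p⟩ : Fin N)) : Finset (Fin N)) := by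
    ext r
    simp only [ub, blkOf_eq, Set.mem_ofPred_eq, Finset.coe_image, Set.mem_image, Finset.mem_coe,
      Finset.mem_product, Finset.mem_univ, and_true]
    constructor
    · rintro ⟨j, hj, hr⟩
      refine ⟨(j, ⟨r.val % b, Nat.mod_lt _ hb⟩), hj, ?_⟩
      ext
      simp only
      rw [← hr]; exact Nat.div_add_mod' _ _
    · rintro ⟨p, hp, rfl⟩
      exact ⟨p.1, hp, hdiv p⟩
  rw [this, Set.ncard_coe_finset, Finset.card_image_of_injective, Finset.card_product]
  · simp
  · intro p p' h
    simp only [Fin.mk.injEq] at h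
    have h1 := hdiv p; have h2 := hdiv p'
    rw [h] at h1
    have h3 : p.1 = p'.1 := Fin.ext (h1.symm.trans h2)
    ext
    · exact congrArg Fin.val h3
    · rw [h3] at h; omega

lemma ub_perm {R η : Type*} (blk : R → Option η) (σ : Equiv.Perm R) (T : Set η) :
    ub (fun r => blk (σ.symm r)) T = σ '' ub blk T := by
  ext r
  simp only [ub, Set.mem_ofPred_eq, Equiv.image_eq_preimage_symm, Set.mem_preimage]

/-- Average over permutations, of the value on sets of size `t`. -/
noncomputable def gh {N : ℕ} (g : Set (Fin N) → ℝ) (t : ℕ) : ℝ :=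
  av (fun σ : Equiv.Perm (Fin N) => g (σ '' {r | r.val < t}))

lemma ncard_lt {N t : ℕ} (h : t ≤ N) : ({r : Fin N | r.val < t} : Set (Fin N)).ncard = t := by
  have : ({r : Fin N | r.val < t} : Set (Fin N)) =
      ((Finset.univ : Finset (Fin t)).image (Fin.castLE h) : Finset (Fin N)) := by
    ext r
    simp
  rw [this, Set.ncard_coe_finset, Finset.card_image_of_injective _ (Fin.castLE_injective h)]
  simp

lemma gh_eq {N : ℕ} (g : Set (Fin N) → ℝ) {S : Set (Fin N)} :
    av (fun σ : Equiv.Perm (Fin N) => g (σ '' S)) = gh g S.ncard := by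
  have : S.ncard ≤ N := by
    simpa using Set.ncard_le_ncard (Set.subset_univ S)
  exact av_perm_image g (ncard_lt this).symm

end perm

section mult

/-- Products of powers. -/
def bp {M E : ℕ} (e : Fin M → Fin E) : ℕ := ∏ t : Fin M, (t.val + 1) ^ (e t).val

lemma bp_pos {M E : ℕ} (e : Fin M → Fin E) : 0 < bp e :=
  Finset.prod_pos fun t _ => by positivity

lemma tele {E : ℕ} (G : ℕ → ℝ) (h0 : ∀ x, 0 ≤ G x) (h1 : ∀ x, G x ≤ 1) :
    |av (fun j : Fin E => G (j.val + 1)) - av (fun j : Fin E => G j.val)| ≤ 1 / E := by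
  rw [← av_sub, av_eq, Fin.sum_univ_eq_sum_range (fun j => G (j + 1) - G j), Finset.sum_range_sub,
    abs_div, Fintype.card_fin]
  rw [abs_of_nonneg (a := (E : ℝ)) (by positivity)]
  gcongr
  rw [abs_le]; constructor <;> linarith [h0 E, h1 E, h0 0, h1 0]

lemma mult_inv {M E : ℕ} (hE : 0 < E) (G : ℕ → ℝ) (h0 : ∀ x, 0 ≤ G x) (h1 : ∀ x, G x ≤ 1) (t : Fin M) :
    |av (fun e : Fin M → Fin E => G ((t.val + 1) * bp e)) - av (fun e : Fin M → Fin E => G (bp e))|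
      ≤ 1 / E := by
  have : Nonempty (Fin E) := ⟨⟨0, hE⟩⟩
  rw [av_update t, av_update t (fun e : Fin M → Fin E => G (bp e)), ← av_sub]
  refine (abs_av_le _).trans (av_le_const fun z => ?_)
  obtain ⟨X, hb⟩ : ∃ X : ℕ, ∀ (inst : DecidableEq (Fin M)) (j : Fin E),
      bp (@Function.update (Fin M) (fun _ => Fin E) inst z t j) = X * (t.val + 1) ^ j.val := by
    refine ⟨∏ s ∈ Finset.univ.erase t, (s.val + 1) ^ (z s).val, fun inst j => ?_⟩
    obtain rfl : inst = instDecidableEqFin M := Subsingleton.elim _ _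
    unfold bp
    rw [← Finset.prod_erase_mul _ _ (Finset.mem_univ t)]
    congr 1
    · refine Finset.prod_congr rfl fun s hs => ?_
      rw [Function.update_of_ne (Finset.ne_of_mem_erase hs)]
    · simp
  have key := tele (E := E) (fun j => G (X * (t.val + 1) ^ j)) (fun _ => h0 _) (fun _ => h1 _)
  have e1 : ∀ j : Fin E, (t.val + 1) * (X * (t.val + 1) ^ j.val) = X * (t.val + 1) ^ (j.val + 1) := by
    intro j; ring
  simp only [hb, e1]
  exact key
end mult
end SzR

namespace SzR

lemma gA_nonneg {R Λ α : Type*} [Finite R] [Finite Λ] [Finite α]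
    (A : Set (R → Λ → Option α)) (T : Set R) : 0 ≤ gA A T := av_nonneg fun _ => ind_nonneg _
lemma gA_le_one {R Λ α : Type*} [Finite R] [Finite Λ] [Nonempty Λ] [Finite α]
    (A : Set (R → Λ → Option α)) (T : Set R) : gA A T ≤ 1 := av_le_const fun _ => ind_le_one _

theorem block_lb {α : Type} [Finite α] [Nonempty α] (hD : DHJ α) {δ : ℝ} (hδ : 0 < δ) :
    ∃ c : ℝ, 0 < c ∧ ∃ ε0 : ℝ, 0 < ε0 ∧ ∀ m : ℕ, ∃ (N : ℕ) (Ω : Type) (_ : Finite Ω) (_ : Nonempty Ω)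
      (blk : Ω → Fin N → Option (Fin m)), (∀ ω j, ∃ r, blk ω r = some j) ∧
      ∀ (Λ : Type) [Finite Λ] [Nonempty Λ] (A : Set (Fin N → Λ → Option α)), δ ≤ dens A →
      ((N : ℝ) * Real.sqrt (Nat.card (Option α) / Nat.card Λ) ≤ ε0) →
      ∀ T : Set (Fin m), T.Nonempty → c ≤ av (fun ω => gA A (ub (blk ω) T)) := by
  obtain ⟨m0, c, hc, h⟩ := line_lb hD hδ
  obtain ⟨E, hE⟩ := exists_nat_gt (4 * 2 ^ m0 / c)
  have hE0 : (0 : ℝ) < E := lt_of_le_of_lt (by positivity) hE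
  have hEn : 0 < E := by exact_mod_cast hE0
  have : Nonempty (Fin E) := ⟨⟨0, hEn⟩⟩
  refine ⟨c / 2 ^ m0 / 2, by positivity, c, hc, fun m => ?_⟩
  set M := max m m0 with hM
  set B : ℕ := ∑ e : Fin M → Fin E, bp e with hB
  have hbB : ∀ e : Fin M → Fin E, bp e ≤ B := fun e =>
    Finset.single_le_sum (f := fun e : Fin M → Fin E => bp e) (fun _ _ => Nat.zero_le _) (Finset.mem_univ e)
  set N := M * B with hN
  have hmN : ∀ e : Fin M → Fin E, m * bp e ≤ N := fun e => Nat.mul_le_mul (le_max_left _ _) (hbB e)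
  have hm0N : ∀ e : Fin M → Fin E, m0 * bp e ≤ N := fun e => Nat.mul_le_mul (le_max_right _ _) (hbB e)
  refine ⟨N, (Fin M → Fin E) × Equiv.Perm (Fin N), inferInstance, inferInstance,
    fun ω r => blkOf N m (bp ω.1) (ω.2.symm r), ?_, ?_⟩
  · rintro ⟨e, σ⟩ j
    have hlt : j.val * bp e < N := by
      refine lt_of_lt_of_le ?_ (hmN e)
      exact Nat.mul_lt_mul_of_pos_right j.2 (bp_pos e)
    refine ⟨σ ⟨j.val * bp e, hlt⟩, ?_⟩
    simp only [Equiv.symm_apply_apply, blkOf_eq]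
    exact Nat.mul_div_cancel _ (bp_pos e)
  · intro Λ _ _ A hA hε T hT
    set G : ℕ → ℝ := gh (gA A) with hG
    have hG0 : ∀ t, 0 ≤ G t := fun t => av_nonneg fun _ => gA_nonneg _ _
    have hG1 : ∀ t, G t ≤ 1 := fun t => av_le_const fun _ => gA_le_one _ _
    have hav : ∀ (m' : ℕ) (e : Fin M → Fin E), m' * bp e ≤ N → ∀ T : Set (Fin m'),
        av (fun σ : Equiv.Perm (Fin N) => gA A (ub (fun r => blkOf N m' (bp e) (σ.symm r)) T)) =
        G (T.ncard * bp e) := by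
      intro m' e hle T
      simp only [ub_perm]
      rw [gh_eq]
      have := ncard_ub (bp_pos e) hle (T.toFinset)
      rw [Set.coe_toFinset] at this
      rw [this, Set.ncard_eq_toFinset_card', hG]
    have hinv : ∀ t : ℕ, 0 < t → t ≤ M → |av (fun e : Fin M → Fin E => G (t * bp e)) -
        av (fun e : Fin M → Fin E => G (bp e))| ≤ 1 / E := by
      intro t ht htM
      obtain ⟨s, rfl⟩ : ∃ s, t = s + 1 := ⟨t - 1, by omega⟩
      exact mult_inv hEn G hG0 hG1 ⟨s, by omega⟩
    have hsum : ∀ e : Fin M → Fin E,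
        c ≤ ∑ T ∈ (Finset.univ : Finset (Finset (Fin m0))).filter (·.Nonempty), G (T.card * bp e) := by
      intro e
      have h1 : ∀ T : Finset (Fin m0), G (T.card * bp e) = av (fun σ : Equiv.Perm (Fin N) =>
          gA A (ub (fun r => blkOf N m0 (bp e) (σ.symm r)) (T : Set (Fin m0)))) := by
        intro T
        rw [hav m0 e (hm0N e), Set.ncard_coe_finset]
      simp only [h1]
      rw [← av_sum]
      refine const_le_av fun σ => ?_
      obtain ⟨T, hT, hcT⟩ := h (Fin N) Λ A hA (by
        have e1 : Nat.card (Fin N) = N := by simp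
        rw [e1]; exact hε) (fun r => blkOf N m0 (bp e) (σ.symm r))
      refine hcT.trans ?_
      have := Finset.single_le_sum (s := (Finset.univ : Finset (Finset (Fin m0))).filter (·.Nonempty))
        (f := fun T : Finset (Fin m0) => gA A (ub (fun r => blkOf N m0 (bp e) (σ.symm r)) (T : Set (Fin m0))))
        (fun _ _ => gA_nonneg _ _) (a := T.toFinset) (by simp [hT])
      simpa using this
    have hsum2 : c ≤ 2 ^ m0 * (av (fun e : Fin M → Fin E => G (bp e)) + 1 / E) := by
      have h1 : c ≤ av (fun e : Fin M → Fin E =>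
          ∑ T ∈ (Finset.univ : Finset (Finset (Fin m0))).filter (·.Nonempty), G (T.card * bp e)) :=
        const_le_av hsum
      rw [av_sum] at h1
      refine h1.trans ?_
      have h2 : ∀ T ∈ (Finset.univ : Finset (Finset (Fin m0))).filter (·.Nonempty),
          av (fun e : Fin M → Fin E => G (T.card * bp e)) ≤
            av (fun e : Fin M → Fin E => G (bp e)) + 1 / E := by
        intro T hT
        have hTc : T.card ≤ m0 := by simpa using Finset.card_le_univ T
        have := hinv T.card (Finset.card_pos.2 (by simpa using hT)) (hTc.trans (le_max_right _ _))
        linarith [(abs_le.1 this).2]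
      refine (Finset.sum_le_card_nsmul _ _ _ h2).trans ?_
      rw [nsmul_eq_mul]
      have h3 : 0 ≤ av (fun e : Fin M → Fin E => G (bp e)) + 1 / E :=
        add_nonneg (av_nonneg fun _ => hG0 _) (by positivity)
      refine mul_le_mul_of_nonneg_right ?_ h3
      have : ((Finset.univ : Finset (Finset (Fin m0))).filter (·.Nonempty)).card ≤ 2 ^ m0 := by
        refine (Finset.card_filter_le _ _).trans ?_
        simp
      exact_mod_cast this
    rw [av_prod]
    have : ∀ e : Fin M → Fin E, av (fun σ : Equiv.Perm (Fin N) =>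
      gA A (ub (fun r => blkOf N m (bp e) (σ.symm r)) T)) = G (T.ncard * bp e) :=
      fun e => hav m e (hmN e) T
    simp only [this]
    have hTm : T.ncard ≤ m := by simpa using Set.ncard_le_ncard (Set.subset_univ T)
    have h5 := hinv T.ncard ((Set.ncard_pos).2 hT) (hTm.trans (le_max_left _ _))
    have h6 := (abs_le.1 h5).1
    have h7 : c / 2 ^ m0 ≤ av (fun e : Fin M → Fin E => G (bp e)) + 1 / E := by
      rw [div_le_iff₀ (by positivity)]; linarith
    have h8 : (1 : ℝ) / E ≤ c / 2 ^ m0 / 4 := by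
      rw [div_lt_iff₀ hc] at hE
      rw [div_div, div_le_div_iff₀ hE0 (by positivity)]
      linarith
    linarith

lemma dens_no_none {α : Type*} [Finite α] [Nonempty α] (m : ℕ) :
    dens {x : Fin m → Option α | ∀ j, x j ≠ none} =
      ((Nat.card α : ℝ) / (Nat.card α + 1)) ^ m := by
  have := Fintype.ofFinite α
  have hinj : Function.Injective (fun (u : Fin m → α) (j : Fin m) => some (u j)) := by
    intro u v h; funext j; exact Option.some_injective _ (congrFun h j)
  have h := av_range hinj (fun _ => 1)
  simp only [av_const, mul_one, one_mul] at h
  have : ∀ x : Fin m → Option α, ind (x ∈ {x : Fin m → Option α | ∀ j, x j ≠ none}) =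
      ind (x ∈ Set.range (fun (u : Fin m → α) (j : Fin m) => some (u j))) := by
    intro x
    apply ind_congr
    constructor
    · intro hx
      choose u hu using fun j => Option.ne_none_iff_exists.1 (hx j)
      exact ⟨u, funext hu⟩
    · rintro ⟨u, rfl⟩ j; simp
  unfold dens
  simp only [this]
  rw [h]
  simp [Nat.card_eq_fintype_card, div_pow]

lemma ind_not_forall {k : ℕ} (P : Fin k → Prop) :
    ind (¬ ∀ a, P a) = ∑ a, ind (¬ P a ∧ ∀ b < a, P b) := by
  by_cases h : ∀ a, P a
  · rw [ind_false (by simpa using h)]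
    symm; apply Finset.sum_eq_zero; intro a _
    exact ind_false fun hh => hh.1 (h a)
  · rw [ind_true h]
    push Not at h
    have hne : (Finset.univ.filter fun a => ¬ P a).Nonempty := by
      obtain ⟨a, ha⟩ := h; exact ⟨a, by simpa using ha⟩
    obtain ⟨a, ha, hmin⟩ := Finset.exists_minimal hne
    have hPa : ¬ P a := by simpa using ha
    have hlt : ∀ b < a, P b := by
      intro b hb
      by_contra hn
      exact absurd (hmin (by simpa using hn) hb.le) (not_le.2 hb)
    rw [Finset.sum_eq_single a]
    · rw [ind_true ⟨hPa, hlt⟩]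
    · intro b _ hba
      apply ind_false
      rintro ⟨h1, h2⟩
      rcases lt_or_gt_of_ne hba with h3 | h3
      · exact h1 (hlt b h3)
      · exact hPa (h2 a h3)
    · simp

end SzR

namespace SzR

lemma Rp_ins {ι α : Type*} (a : α) (S : Set (ι → Option α)) :
    InsOn a Set.univ {x | Rp a x ∈ S} := by
  intro x y _ hxy hx
  have : Rp a x = Rp a y := by funext i; simp only [Rp, hxy i]
  simpa [this] using hx

lemma InsOn.compl {ι α : Type*} {a : α} {S : Set (ι → Option α)} (h : InsOn a Set.univ S) :
    InsOn a Set.univ Sᶜ := by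
  intro x y h1 h2 hx hy
  exact hx (h y x (fun i hi => absurd (Set.mem_univ i) hi) (fun i => (h2 i).symm) hy)

/-- A point with a wildcard, whose completions are all in `A`, gives a line. -/
lemma line_of {ι α : Type*} {S : Set (ι → Option α)} {x : ι → Option α} (hx : x ∈ S)
    (h : ∀ a, Rp a x ∈ S) {i : ι} (hi : x i = none) : HasSub Unit S := by
  refine ⟨fun i => (x i).elim (Sum.inr ()) (fun a => Sum.inl (some a)), fun _ => ⟨i, by simp [hi]⟩, ?_⟩
  intro u
  rcases hu : u () with _ | a
  · convert hx using 1
    funext j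
    simp only [ev]
    rcases hj : x j with _ | b
    · simpa using hu
    · simp
  · convert h a using 1
    funext j
    simp only [ev, Rp]
    rcases hj : x j with _ | b
    · simpa using hu
    · simp

theorem incr {k : ℕ} (hk : 0 < k) (hD : DHJ (Fin k)) {δ : ℝ} (hδ : 0 < δ) :
    ∃ γ : ℝ, 0 < γ ∧ ∀ d : ℕ, ∃ N : ℕ, ∀ (ι : Type) [Finite ι], N ≤ Nat.card ι →
      ∀ A : Set (ι → Option (Fin k)), δ ≤ dens A → ¬ HasSub Unit A →
      ∃ V : ι → Option (Fin k) ⊕ Fin d, Proper V ∧ dens A + γ ≤ dens {x | ev V x ∈ A} := by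
  have : Nonempty (Fin k) := ⟨⟨0, hk⟩⟩
  have hM := mdhj_of_dhj hD
  obtain ⟨c, hc, ε0, hε0, hb⟩ := block_lb hD hδ
  set κ := δ * c / 16 with hκ
  have hκ0 : 0 < κ := by positivity
  have hk' : (0 : ℝ) < k := by exact_mod_cast hk
  refine ⟨κ / k / 2 ^ k, by positivity, fun d => ?_⟩
  obtain ⟨N1, hN1⟩ := multi_incr hM (Finset.univ : Finset (Fin k)) d (κ / k) (by positivity)
  have hρ : (0 : ℝ) ≤ (k : ℝ) / (k + 1) := by positivity
  have hρ1 : (k : ℝ) / (k + 1) < 1 := by rw [div_lt_one (by positivity)]; linarith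
  obtain ⟨m1, hm1⟩ := exists_pow_lt_of_lt_one (show 0 < min κ (1 / 2) by positivity) hρ1
  set m := max N1 m1 with hm
  have hρm : ((k : ℝ) / (k + 1)) ^ m ≤ min κ (1 / 2) :=
    (pow_le_pow_of_le_one hρ hρ1.le (le_max_right _ _)).trans hm1.le
  obtain ⟨R, Ω, hΩ1, hΩ2, blk, hblk, hbb⟩ := hb m
  obtain ⟨l, hl, hle⟩ := exists_ell R (Nat.card (Option (Fin k)))
    (show 0 < min ε0 (min (c / 2) (δ * c / 8)) by positivity)
  have : Nonempty (Fin l) := ⟨⟨0, hl⟩⟩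
  refine ⟨R * l, fun ι _ hι A0 hA0 hno0 => ?_⟩
  obtain ⟨V0, hV0, h0⟩ := exists_sub_le_av (α := Option (Fin k)) (η := Fin R × Fin l)
    (by simpa using hι) (fun x => ind (x ∈ A0))
  set A1 : Set (Fin R × Fin l → Option (Fin k)) := {x | ev V0 x ∈ A0} with hA1
  have hno1 : ¬ HasSub Unit A1 := fun h => hno0 (HasSub.of_pull hV0 h)
  set A : Set (Fin R → Fin l → Option (Fin k)) := {x | (fun p : Fin R × Fin l => x p.1 p.2) ∈ A1} with hAdef
  have hAd : dens A = dens A1 := av_curry (fun x => ind (x ∈ A1))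
  set δ' := dens A with hδ'
  have h01 : dens A0 ≤ δ' := by rw [hAd]; exact h0
  have hδδ : δ ≤ δ' := hA0.trans h01
  have hδ1 : δ' ≤ 1 := dens_le_one _
  set ε := (R : ℝ) * Real.sqrt (Nat.card (Option (Fin k)) / l) with hε
  have hε1 : ε ≤ ε0 := hle.trans (min_le_left _ _)
  have hε2 : ε ≤ c / 2 := hle.trans ((min_le_right _ _).trans (min_le_left _ _))
  have hε3 : ε ≤ δ * c / 8 := hle.trans ((min_le_right _ _).trans (min_le_right _ _))
  have hcR : Nat.card (Fin R) = R := by simp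
  have hcl : Nat.card (Fin l) = l := by simp
  set a0 : Fin k := ⟨0, hk⟩
  set w : Ω → (Fin m → Option (Fin k)) → Fin R → Option (Fin k) := fun ω => bw (some a0) (blk ω) with hw
  set Y := Fin R → Fin l × (Fin l → Option (Fin k)) with hY
  set S : Ω → Y → Set (Fin m → Option (Fin k)) := fun ω y => {x | ow y (w ω x) ∈ A} with hS
  set Dd : Ω → Y → Set (Fin m → Option (Fin k)) := fun ω y => {x | ∀ a, Rp a x ∈ S ω y} with hDd
  have hSd : δ' - ε ≤ av (fun ω => av (fun y => dens (S ω y))) := by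
    refine const_le_av fun ω => ?_
    unfold dens
    rw [av_comm]
    refine const_le_av fun x => ?_
    have := (abs_le.1 (tv_point (w ω x) (fun z => ind (z ∈ A)) (fun _ => ind_nonneg _)
      (fun _ => ind_le_one _))).1
    rw [hcR, hcl] at this
    have h3 : av (fun z => ind (z ∈ A)) = δ' := rfl
    rw [h3] at this
    simp only [hS, Set.mem_ofPred_eq]
    linarith
  have hno := dens_no_none (α := Fin k) m
  have hck : Nat.card (Fin k) = k := by simp
  rw [hck] at hno
  have hDdd : c / 4 ≤ av (fun ω => av (fun y => dens (Dd ω y))) := by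
    unfold dens
    have hsw : av (fun ω => av (fun y => av (fun x => ind (x ∈ Dd ω y)))) =
        av (fun x => av (fun ω => av (fun y => ind (x ∈ Dd ω y)))) := by
      rw [av_comm (fun x ω => av (fun y => ind (x ∈ Dd ω y)))]
      congr 1; funext ω
      rw [av_comm]
    rw [hsw]
    have hpt : ∀ x : Fin m → Option (Fin k), c / 2 * (1 - ind (x ∈ {x : Fin m → Option (Fin k) | ∀ j, x j ≠ none})) ≤
        av (fun ω => av (fun y => ind (x ∈ Dd ω y))) := by
      intro x
      by_cases hx : ∀ j, x j ≠ none
      · rw [ind_true (P := x ∈ {x : Fin m → Option (Fin k) | ∀ j, x j ≠ none}) hx, sub_self, mul_zero]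
        exact av_nonneg fun _ => av_nonneg fun _ => ind_nonneg _
      · rw [ind_false (P := x ∈ {x : Fin m → Option (Fin k) | ∀ j, x j ≠ none}) hx, sub_zero, mul_one]
        push Not at hx
        have h1 := hbb (Fin l) A hδδ (by rw [hcl]; exact hε1) {j | x j = none} hx
        have h2 : ∀ ω, gA A (ub (blk ω) {j | x j = none}) - ε ≤ av (fun y => ind (x ∈ Dd ω y)) := by
          intro ω
          have := (abs_le.1 (tv_line (w ω x) A)).1
          rw [hcR, hcl, hw, ub_bw] at this
          have h3 : ∀ y, ind (x ∈ Dd ω y) = ind (∀ a, ow y (Rp a (bw (some a0) (blk ω) x)) ∈ A) := by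
            intro y
            apply ind_congr
            simp only [hDd, hS, hw, Set.mem_ofPred_eq, bw_Rp]
          simp only [h3]
          linarith
        have h4 := av_mono h2
        rw [av_sub, av_const] at h4
        linarith
    have h5 := av_mono hpt
    rw [av_mul_left, av_sub, av_const] at h5
    have h6 : av (fun x => ind (x ∈ {x : Fin m → Option (Fin k) | ∀ j, x j ≠ none})) ≤ 1 / 2 := by
      refine hno.trans_le (hρm.trans (min_le_right _ _))
    nlinarith
  obtain ⟨ω, hω⟩ := exists_le_av (fun ω => av (fun y => dens (S ω y) + δ' * dens (Dd ω y)))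
  obtain ⟨y, hy⟩ := exists_le_av (fun y => dens (S ω y) + δ' * dens (Dd ω y))
  have hmain : δ' - ε + δ' * (c / 4) ≤ dens (S ω y) + δ' * dens (Dd ω y) := by
    refine le_trans ?_ (hω.trans hy)
    have h1 : av (fun ω => av (fun y => dens (S ω y) + δ' * dens (Dd ω y))) =
        av (fun ω => av (fun y => dens (S ω y))) + δ' * av (fun ω => av (fun y => dens (Dd ω y))) := by
      simp only [av_add, av_mul_left]
    rw [h1]
    have : 0 ≤ δ' := hδ.le.trans hδδ
    nlinarith
  -- the subspace
  have hprop : Proper (cmp (cmp V0 (owV y)) (bV (some a0) (blk ω))) :=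
    (hV0.cmp (proper_owV y)).cmp (proper_bV _ (hblk ω))
  have hSev : S ω y = {x | ev (cmp (cmp V0 (owV y)) (bV (some a0) (blk ω))) x ∈ A0} := by
    ext x
    simp only [hS, hAdef, hA1, hw, Set.mem_ofPred_eq, ev_cmp, ev_bV, ev_owV]
  have hnoS : ¬ HasSub Unit (S ω y) := by
    rw [hSev]; exact fun h => hno0 (HasSub.of_pull hprop h)
  set SS := S ω y with hSS
  set f : (Fin m → Option (Fin k)) → ℝ := fun x => ind (x ∈ SS) - δ' with hf
  have hbig : κ ≤ av (fun x => f x * ind (¬ ∀ a, Rp a x ∈ SS)) := by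
    have h1 : ∀ x, ind (x ∈ SS) - ind (x ∈ {x : Fin m → Option (Fin k) | ∀ j, x j ≠ none}) - δ' +
        δ' * ind (x ∈ Dd ω y) ≤ f x * ind (¬ ∀ a, Rp a x ∈ SS) := by
      intro x
      have h0 := ind_nonneg (x ∈ {x : Fin m → Option (Fin k) | ∀ j, x j ≠ none})
      by_cases hx : ∀ a, Rp a x ∈ SS
      · rw [ind_true (P := x ∈ Dd ω y) hx, ind_false (P := ¬ ∀ a, Rp a x ∈ SS) (by simpa using hx)]
        by_cases hxs : x ∈ SS
        · rw [ind_true hxs, ind_true (P := x ∈ {x : Fin m → Option (Fin k) | ∀ j, x j ≠ none})]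
          · linarith
          · intro j hj
            exact hnoS (line_of hxs hx hj)
        · rw [ind_false hxs]; linarith
      · rw [ind_false (P := x ∈ Dd ω y) hx, ind_true (P := ¬ ∀ a, Rp a x ∈ SS) hx]
        simp only [hf]; linarith
    have h2 := av_mono h1
    rw [av_add, av_sub, av_sub, av_const, av_mul_left] at h2
    have h3 : av (fun x => ind (x ∈ {x : Fin m → Option (Fin k) | ∀ j, x j ≠ none})) ≤ κ :=
      hno.trans_le (hρm.trans (min_le_left _ _))
    refine le_trans ?_ h2
    have h4 : av (fun x => ind (x ∈ SS)) = dens SS := rfl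
    have h5 : av (fun x => ind (x ∈ Dd ω y)) = dens (Dd ω y) := rfl
    rw [h4, h5]
    have : δ * (c / 4) ≤ δ' * (c / 4) := by gcongr
    linarith
  have hsplit : av (fun x => f x * ind (¬ ∀ a, Rp a x ∈ SS)) =
      ∑ a : Fin k, av (fun x => f x * ind (¬ Rp a x ∈ SS ∧ ∀ b < a, Rp b x ∈ SS)) := by
    rw [← av_sum]
    congr 1; funext x
    rw [ind_not_forall, Finset.mul_sum]
  obtain ⟨a, ha⟩ : ∃ a : Fin k, κ / k ≤
      av (fun x => f x * ind (¬ Rp a x ∈ SS ∧ ∀ b < a, Rp b x ∈ SS)) := by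
    by_contra! hcon
    have := Finset.sum_lt_sum_of_nonempty (s := (Finset.univ : Finset (Fin k))) Finset.univ_nonempty
      (fun a _ => hcon a)
    rw [← hsplit] at this
    rw [Finset.sum_const, Finset.card_univ, Fintype.card_fin, nsmul_eq_mul,
      mul_div_cancel₀ _ hk'.ne'] at this
    linarith
  obtain ⟨V, hV, hfin⟩ := hN1 (Fin m) (by simp [hm]) f (fun x => by
      have h1 := ind_nonneg (x ∈ SS); have h2 := ind_le_one (x ∈ SS)
      have : 0 ≤ δ' := hδ.le.trans hδδ
      simp only [hf]; rw [abs_le]; constructor <;> linarith)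
    (fun b => if b < a then {x | Rp b x ∈ SS} else if b = a then {x | Rp b x ∈ SS}ᶜ else Set.univ)
    (fun b _ => by
      split_ifs
      · exact Rp_ins b SS
      · exact (Rp_ins b SS).compl
      · exact fun _ _ _ _ _ => Set.mem_univ _)
    (by
      refine ha.trans_eq ?_
      congr 1; funext x
      congr 1
      apply ind_congr
      constructor
      · rintro ⟨h1, h2⟩ b _
        split_ifs with h3 h4
        · exact h2 b h3
        · subst h4; exact h1
        · exact Set.mem_univ _
      · intro h
        constructor
        · have := h a (Finset.mem_univ _)
          simpa using this
        · intro b hb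
          have := h b (Finset.mem_univ _)
          simpa [hb] using this)
  refine ⟨cmp (cmp (cmp V0 (owV y)) (bV (some a0) (blk ω))) V, hprop.cmp hV, ?_⟩
  rw [Finset.card_univ, Fintype.card_fin] at hfin
  simp only [hf] at hfin
  rw [av_sub, av_const] at hfin
  have : av (fun x => ind (ev V x ∈ SS)) =
      dens {x | ev (cmp (cmp (cmp V0 (owV y)) (bV (some a0) (blk ω))) V) x ∈ A0} := by
    unfold dens
    congr 1; funext x
    rw [hSev]
    simp only [Set.mem_ofPred_eq, ev_cmp]
  rw [← this]
  linarith

theorem dhj_option {k : ℕ} (hk : 0 < k) (hD : DHJ (Fin k)) : DHJ (Option (Fin k)) := by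
  intro δ hδ
  obtain ⟨γ, hγ, hinc⟩ := incr hk hD hδ
  have key : ∀ j : ℕ, ∃ N : ℕ, ∀ (ι : Type) [Finite ι], N ≤ Nat.card ι →
      ∀ A : Set (ι → Option (Fin k)), δ ≤ dens A → 1 < dens A + j * γ → HasSub Unit A := by
    intro j
    induction j with
    | zero =>
      refine ⟨0, fun ι _ _ A _ h => ?_⟩
      have := dens_le_one A
      simp at h; linarith
    | succ j ih =>
      obtain ⟨N, hN⟩ := ih
      obtain ⟨N', hN'⟩ := hinc N
      refine ⟨N', fun ι _ hι A hA h => ?_⟩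
      by_contra hno
      obtain ⟨V, hV, hd⟩ := hN' ι hι A hA hno
      refine hno (HasSub.of_pull hV (hN (Fin N) (by simp) _ (by linarith) ?_))
      push_cast at h; linarith
  obtain ⟨j, hj⟩ := exists_nat_gt (1 / γ)
  obtain ⟨N, hN⟩ := key j
  refine ⟨N, fun ι _ hι A hA => hN ι hι A hA ?_⟩
  rw [div_lt_iff₀ hγ] at hj; linarith

theorem DHJ.equiv {α β : Type} (e : α ≃ β) (h : DHJ α) : DHJ β := by
  intro δ hδ
  obtain ⟨N, hN⟩ := h δ hδ
  refine ⟨N, fun ι _ hι A hA => ?_⟩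
  obtain ⟨V, hV, hx⟩ := hN ι hι {x | (fun i => e (x i)) ∈ A} (by
    refine hA.trans_eq ?_
    exact (av_equiv (Equiv.arrowCongr (Equiv.refl ι) e) (fun x => ind (x ∈ A))).symm)
  refine ⟨fun i => (V i).map e id, fun u => ?_, fun x => ?_⟩
  · obtain ⟨i, hi⟩ := hV u
    exact ⟨i, by simp [hi]⟩
  · have := hx (fun u => e.symm (x u))
    have h2 : ev (fun i => (V i).map e id) x = fun i => e (ev V (fun u => e.symm (x u)) i) := by
      funext i
      simp only [ev]
      rcases V i with b | u <;> simp
    rw [h2]; exact this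

theorem dhj (k : ℕ) (hk : 0 < k) : DHJ (Fin k) := by
  induction k, hk using Nat.le_induction with
  | base =>
    intro δ hδ
    refine ⟨1, fun ι _ hι A hA => ?_⟩
    obtain ⟨x, hx⟩ := exists_of_dens_pos (lt_of_lt_of_le hδ hA)
    have : Nonempty ι := (Nat.card_pos_iff.1 hι).1
    obtain ⟨i⟩ := this
    refine ⟨fun _ => Sum.inr (), fun _ => ⟨i, rfl⟩, fun z => ?_⟩
    rw [Subsingleton.elim (ev _ z) x]; exact hx
  | succ k hk ih => exact (dhj_option hk ih).equiv (finSuccEquiv k).symm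

end SzR

namespace SzR

lemma sum_ind {X : Type*} (s : Finset X) (P : X → Prop) [DecidablePred P] :
    ∑ x ∈ s, ind (P x) = ((s.filter P).card : ℝ) := by
  rw [Finset.card_filter]
  push_cast
  refine Finset.sum_congr rfl fun x _ => ?_
  unfold ind
  by_cases h : P x <;> simp [h]

/-- pairs `(a,d)` generating a `k`-term progression inside `B`. -/
noncomputable def APs (k n : ℕ) (B : Finset ℕ) : Finset (ℕ × ℕ) :=
  (Finset.Icc 1 n ×ˢ Finset.Icc 1 n).filter (fun p => ∀ i < k, p.1 + i * p.2 ∈ B)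

theorem supersat (k : ℕ) (hk : 2 ≤ k) {ε : ℝ} (hε : 0 < ε) :
    ∃ c : ℝ, 0 < c ∧ ∃ n₀ : ℕ, ∀ n : ℕ, n₀ ≤ n → ∀ B ⊆ Finset.Icc 1 n, ε * n ≤ B.card →
      c * n ^ 2 ≤ (APs k n B).card := by
  obtain ⟨m, hm⟩ := dhj k (by omega) (ε / 4) (by positivity)
  have hkne : Nonempty (Fin k) := ⟨⟨0, by omega⟩⟩
  have hL : (0 : ℝ) < Nat.card (Fin m → Fin k ⊕ Unit) := by exact_mod_cast Nat.card_pos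
  set c2 := ε / 4 / Nat.card (Fin m → Fin k ⊕ Unit) with hc2
  have hc20 : 0 < c2 := by positivity
  set η : ℝ := ε / (2 * (m * k + 1)) with hη
  have hη0 : 0 < η := by positivity
  obtain ⟨n0, hn0⟩ := exists_nat_gt (2 / η)
  refine ⟨c2 * (η / 2), by positivity, n0 + 1, fun n hn B hB hBc => ?_⟩
  have hn1 : 2 / η < n := hn0.trans_le (by exact_mod_cast (by omega))
  rw [div_lt_iff₀ hη0] at hn1
  have hnpos : 0 < n := by omega
  set D := ⌊η * n⌋₊ with hD
  have hD1 : (D : ℝ) ≤ η * n := Nat.floor_le (by positivity)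
  have hD2 : η * n < D + 1 := Nat.lt_floor_add_one _
  have hD3 : η / 2 * n ≤ D := by linarith
  have hDpos : 0 < D := by
    have : (0 : ℝ) < D := by linarith
    exact_mod_cast this
  have : Nonempty (Fin n) := ⟨⟨0, hnpos⟩⟩
  have : Nonempty (Fin D) := ⟨⟨0, hDpos⟩⟩
  set φ : (Fin m → Fin k) → ℕ := fun x => ∑ r, (x r).val with hφ
  have hφle : ∀ x, φ x ≤ m * k := by
    intro x
    refine (Finset.sum_le_card_nsmul _ _ k fun r _ => (x r).2.le).trans ?_
    simp
  set pt : Fin n × Fin D → (Fin m → Fin k) → ℕ := fun q x => (q.1.val + 1) + (q.2.val + 1) * φ x with hpt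
  have h1 : ∀ (x : Fin m → Fin k) (j : Fin D), ε / 2 ≤ av (fun y : Fin n => ind (pt (y, j) x ∈ B)) := by
    intro x j
    have hs : (j.val + 1) * φ x ≤ D * (m * k) := Nat.mul_le_mul (by omega) (hφle x)
    set s := (j.val + 1) * φ x with hs'
    have hcard : B.card ≤ (Finset.univ.filter (fun y : Fin n => pt (y, j) x ∈ B)).card + s := by
      have hsub : B ⊆ (Finset.univ.filter (fun y : Fin n => pt (y, j) x ∈ B)).image (fun y => y.val + 1 + s)
          ∪ Finset.Icc 1 s := by
        intro b hb
        have hb' := Finset.mem_Icc.1 (hB hb)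
        by_cases hbs : b ≤ s
        · exact Finset.mem_union_right _ (Finset.mem_Icc.2 ⟨hb'.1, hbs⟩)
        · refine Finset.mem_union_left _ (Finset.mem_image.2 ⟨⟨b - s - 1, by omega⟩, ?_, ?_⟩)
          · simp only [Finset.mem_filter, Finset.mem_univ, true_and, hpt]
            rw [← hs']
            convert hb using 1; omega
          · simp only; omega
      refine (Finset.card_le_card hsub).trans ((Finset.card_union_le _ _).trans ?_)
      refine Nat.add_le_add Finset.card_image_le ?_
      simp
    have hav : av (fun y : Fin n => ind (pt (y, j) x ∈ B)) =
        (Finset.univ.filter (fun y : Fin n => pt (y, j) x ∈ B)).card / n := by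
      rw [av_eq, Fintype.card_fin]
      congr 1
      rw [sum_ind]
    rw [hav, le_div_iff₀ (by exact_mod_cast hnpos)]
    have hcard' : (B.card : ℝ) ≤ (Finset.univ.filter (fun y : Fin n => pt (y, j) x ∈ B)).card + s := by
      exact_mod_cast hcard
    have hs2 : (s : ℝ) ≤ D * (m * k) := by exact_mod_cast hs
    have hs3 : (D : ℝ) * (m * k) ≤ ε / 2 * n := by
      calc (D : ℝ) * (m * k) ≤ (η * n) * (m * k + 1) := by
            have : (0 : ℝ) ≤ m * k := by positivity
            gcongr; linarith
        _ = ε / 2 * n := by rw [hη]; field_simp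
    linarith
  have h2 : ε / 2 ≤ av (fun q : Fin n × Fin D => dens {x | pt q x ∈ B}) := by
    unfold dens
    rw [av_comm]
    refine const_le_av fun x => ?_
    rw [av_prod, av_comm]
    exact const_le_av fun j => h1 x j
  have h3 : ε / 4 ≤ av (fun q : Fin n × Fin D => ind (ε / 4 ≤ dens {x | pt q x ∈ B})) := by
    refine le_trans ?_ (av_ind_ge (by positivity) fun _ => dens_le_one _)
    linarith
  obtain ⟨L, hLL⟩ := av_pigeon (fun q : Fin n × Fin D => ε / 4 ≤ dens {x | pt q x ∈ B})
    (fun (L : Fin m → Fin k ⊕ Unit) q => Proper L ∧ ∀ x, pt q (ev L x) ∈ B)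
    (fun q hq => hm (Fin m) (by simp) _ hq)
  have hL2 : c2 ≤ _ := le_trans (by rw [hc2]; gcongr) hLL
  obtain ⟨q1, hq1⟩ := exists_of_dens_pos (A := {q : Fin n × Fin D | Proper L ∧ ∀ x, pt q (ev L x) ∈ B})
    (lt_of_lt_of_le (by positivity) hL2)
  have hLp : Proper L := hq1.1
  -- the progression
  set s := ∑ r, Sum.elim (fun a : Fin k => a.val) (fun _ => 0) (L r) with hs
  set t := ∑ r, Sum.elim (fun _ : Fin k => 0) (fun _ => 1) (L r) with ht
  have htpos : 0 < t := by
    obtain ⟨r, hr⟩ := hLp ()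
    refine Finset.sum_pos' (fun _ _ => Nat.zero_le _) ⟨r, Finset.mem_univ _, ?_⟩
    simp [hr]
  have hφL : ∀ i : Fin k, φ (ev L (fun _ => i)) = s + i.val * t := by
    intro i
    rw [hφ, hs, ht, Finset.mul_sum, ← Finset.sum_add_distrib]
    refine Finset.sum_congr rfl fun r _ => ?_
    simp only [ev]
    rcases L r with a | u <;> simp
  set QS := Finset.univ.filter (fun q : Fin n × Fin D => Proper L ∧ ∀ x, pt q (ev L x) ∈ B) with hQS
  have hQc : c2 * (n * D) ≤ QS.card := by
    rw [av_eq, Fintype.card_prod, Fintype.card_fin, Fintype.card_fin, le_div_iff₀ (by positivity)] at hL2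
    rw [sum_ind] at hL2
    exact_mod_cast hL2
  have hinj : QS.card ≤ (APs k n B).card := by
    refine Finset.card_le_card_of_injOn
      (fun q => ((q.1.val + 1) + (q.2.val + 1) * s, (q.2.val + 1) * t)) ?_ ?_
    · intro q hq
      have hq' : ∀ x, pt q (ev L x) ∈ B := by
        have := Finset.mem_filter.1 (Finset.mem_coe.1 hq); exact this.2.2
      have hap : ∀ i < k, (q.1.val + 1) + (q.2.val + 1) * s + i * ((q.2.val + 1) * t) ∈ B := by
        intro i hi
        have := hq' (fun _ => ⟨i, hi⟩)
        simp only [hpt] at this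
        rw [hφL] at this
        convert this using 1
        simp only; ring
      simp only [APs, Finset.coe_filter, Finset.mem_product, Finset.mem_Icc, Set.mem_ofPred_eq]
      have ha := Finset.mem_Icc.1 (hB (hap 0 (by omega)))
      have hb := Finset.mem_Icc.1 (hB (hap 1 (by omega)))
      simp only [zero_mul, add_zero, one_mul] at ha hb
      have : 0 < (q.2.val + 1) * t := by positivity
      exact ⟨⟨⟨ha.1, ha.2⟩, by omega, by omega⟩, hap⟩
    · rintro ⟨y, j⟩ _ ⟨y', j'⟩ _ h
      simp only [Prod.mk.injEq] at h
      have hj : j.val = j'.val := by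
        have := Nat.eq_of_mul_eq_mul_right htpos h.2; omega
      have hy : y.val = y'.val := by
        have := h.1; rw [hj] at this; omega
      ext
      · exact hy
      · exact hj
  have : (QS.card : ℝ) ≤ (APs k n B).card := by exact_mod_cast hinj
  refine le_trans ?_ (hQc.trans this)
  calc c2 * (η / 2) * n ^ 2 = c2 * (n * (η / 2 * n)) := by ring
    _ ≤ c2 * (n * D) := by gcongr

end SzR

namespace SzR

/-- Degree of a set in a hypergraph. -/
noncomputable def dg (H : Finset (Finset ℕ)) (T : Finset ℕ) : ℕ := (H.filter (T ⊆ ·)).card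

structure Good (V : Finset ℕ) (τ : ℝ) (s : ℕ) (K : ℝ) (H : Finset (Finset ℕ)) : Prop where
  sub : ∀ e ∈ H, e ⊆ V
  card : ∀ e ∈ H, e.card = s
  deg : ∀ T : Finset ℕ, T.Nonempty → (dg H T : ℝ) * τ ^ s ≤ K * τ ^ T.card

def Indep (H : Finset (Finset ℕ)) (I : Finset ℕ) : Prop := ∀ e ∈ H, ¬ e ⊆ I

/-- Container property with consistent fingerprints. -/
def Cont (V : Finset ℕ) (P : Finset ℕ → Prop) (q M : ℝ) : Prop :=
  ∃ f g : Finset ℕ → Finset ℕ, ∀ I ⊆ V, P I → f I ⊆ I ∧ I ⊆ g I ∧ g I ⊆ V ∧ ((f I).card : ℝ) ≤ q ∧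
    ((g I).card : ℝ) ≤ M ∧ ∀ I', f I ⊆ I' → I' ⊆ I → f I' = f I ∧ g I' = g I

lemma Cont.mono {V : Finset ℕ} {P Q : Finset ℕ → Prop} {q M q' M' : ℝ} (h : Cont V P q M)
    (hP : ∀ I, Q I → P I) (hq : q ≤ q') (hM : M ≤ M') : Cont V Q q' M' := by
  obtain ⟨f, g, hfg⟩ := h
  refine ⟨f, g, fun I hI hQ => ?_⟩
  obtain ⟨h1, h2, h3, h4, h5, h6⟩ := hfg I hI (hP I hQ)
  exact ⟨h1, h2, h3, h4.trans hq, h5.trans hM, h6⟩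

section step
variable (τ : ℝ) (s : ℕ) (H L : Finset (Finset ℕ))

def Sat (T : Finset ℕ) : Prop := τ ^ T.card ≤ (dg L T : ℝ) * τ ^ s

noncomputable def res : Finset (Finset ℕ) := H.filter (fun e => ∀ T ⊆ e, T.Nonempty → ¬ Sat τ s L T)

noncomputable def links (v : ℕ) : Finset (Finset ℕ) :=
  ((res τ s H L).filter (v ∈ ·)).image (·.erase v)

variable {τ s H L} {V : Finset ℕ} {K : ℝ}

lemma res_sub : res τ s H L ⊆ H := Finset.filter_subset _ _

lemma dg_mono {H H' : Finset (Finset ℕ)} (h : H ⊆ H') (T : Finset ℕ) : dg H T ≤ dg H' T :=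
  Finset.card_le_card (Finset.filter_subset_filter _ h)

lemma mem_links {v : ℕ} {f : Finset ℕ} : f ∈ links τ s H L v ↔ ∃ e ∈ res τ s H L, v ∈ e ∧ e.erase v = f := by
  simp [links, and_assoc]

lemma card_links (v : ℕ) : (links τ s H L v).card = dg (res τ s H L) {v} := by
  unfold links dg
  rw [Finset.card_image_of_injOn]
  · congr 1; ext e; simp
  · intro e he e' he' h
    simp only [Finset.coe_filter, Set.mem_ofPred_eq] at he he'
    simp only at h
    rw [← Finset.insert_erase he.2, ← Finset.insert_erase he'.2, h]

lemma links_disj (hτ : 0 < τ) (hs : 0 < s) (hH : Good V τ (s + 1) K H) (v : ℕ) : Disjoint L (links τ s H L v) := by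
  rw [Finset.disjoint_left]
  intro f hf hf'
  obtain ⟨e, he, hv, rfl⟩ := mem_links.1 hf'
  have hc := hH.card e (res_sub he)
  have hc' : (e.erase v).card = s := by rw [Finset.card_erase_of_mem hv, hc]; rfl
  refine (Finset.mem_filter.1 he).2 (e.erase v) (Finset.erase_subset _ _)
    (Finset.card_pos.1 (by omega)) ?_
  unfold Sat
  rw [hc']
  have h1 : 1 ≤ dg L (e.erase v) := Finset.card_pos.2 ⟨e.erase v, by simp [hf]⟩
  have h2 : (1 : ℝ) ≤ dg L (e.erase v) := by exact_mod_cast h1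
  have h3 : 0 < τ ^ s := by positivity
  nlinarith

lemma good_union (hτ : 0 < τ) (hH : Good V τ (s + 1) K H) (hL : Good V τ s (K + 1) L) (v : ℕ) :
    Good V τ s (K + 1) (L ∪ links τ s H L v) := by
  refine ⟨fun e he => ?_, fun e he => ?_, fun T hT => ?_⟩
  · rcases Finset.mem_union.1 he with h | h
    · exact hL.sub e h
    · obtain ⟨e', he', hv, rfl⟩ := mem_links.1 h
      exact (Finset.erase_subset _ _).trans (hH.sub _ (res_sub he'))
  · rcases Finset.mem_union.1 he with h | h
    · exact hL.card e h
    · obtain ⟨e', he', hv, rfl⟩ := mem_links.1 h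
      rw [Finset.card_erase_of_mem hv, hH.card _ (res_sub he')]; rfl
  · have h1 : dg (L ∪ links τ s H L v) T ≤ dg L T + dg (links τ s H L v) T := by
      unfold dg; rw [Finset.filter_union]; exact Finset.card_union_le _ _
    have h1' : (dg (L ∪ links τ s H L v) T : ℝ) ≤ dg L T + dg (links τ s H L v) T := by exact_mod_cast h1
    have hpos : 0 < τ ^ s := by positivity
    by_cases h2 : dg (links τ s H L v) T = 0
    · rw [h2, Nat.cast_zero, add_zero] at h1'
      exact (mul_le_mul_of_nonneg_right h1' hpos.le).trans (hL.deg T hT)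
    · obtain ⟨f, hf⟩ := Finset.card_pos.1 (Nat.pos_of_ne_zero h2)
      obtain ⟨hf1, hf2⟩ := Finset.mem_filter.1 hf
      obtain ⟨e, he, hv, rfl⟩ := mem_links.1 hf1
      have hvT : v ∉ T := fun h => Finset.notMem_erase v e (hf2 h)
      have hns : ¬ Sat τ s L T := (Finset.mem_filter.1 he).2 T (hf2.trans (Finset.erase_subset _ _)) hT
      unfold Sat at hns
      push Not at hns
      have h3 : dg (links τ s H L v) T ≤ dg H (insert v T) := by
        unfold dg
        refine Finset.card_le_card_of_injOn (fun f => insert v f) ?_ ?_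
        · intro f hf
          simp only [Finset.coe_filter, Set.mem_ofPred_eq] at hf ⊢
          obtain ⟨e, he, hv, rfl⟩ := mem_links.1 hf.1
          rw [Finset.insert_erase hv]
          refine ⟨res_sub he, ?_⟩
          rw [Finset.insert_subset_iff]
          exact ⟨hv, hf.2.trans (Finset.erase_subset _ _)⟩
        · intro f hf f' hf' h
          simp only [Finset.coe_filter, Set.mem_ofPred_eq] at hf hf'
          obtain ⟨e, he, hv, rfl⟩ := mem_links.1 hf.1
          obtain ⟨e', he', hv', rfl⟩ := mem_links.1 hf'.1
          simp only [Finset.insert_erase hv, Finset.insert_erase hv'] at h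
          rw [h]
      have h3' : (dg (links τ s H L v) T : ℝ) ≤ dg H (insert v T) := by exact_mod_cast h3
      have h4 := hH.deg (insert v T) (by simp)
      rw [Finset.card_insert_of_notMem hvT, pow_succ, pow_succ, ← mul_assoc, ← mul_assoc] at h4
      have h5 := le_of_mul_le_mul_right h4 hτ
      calc (dg (L ∪ links τ s H L v) T : ℝ) * τ ^ s ≤ (dg L T + dg H (insert v T)) * τ ^ s := by
            gcongr; linarith
        _ ≤ (K + 1) * τ ^ T.card := by linarith

lemma indep_links {I : Finset ℕ} {v : ℕ} (hv : v ∈ I) (hI : Indep H I) (hL : Indep L I) :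
    Indep (L ∪ links τ s H L v) I := by
  intro f hf hfI
  rcases Finset.mem_union.1 hf with h | h
  · exact hL f h hfI
  · obtain ⟨e, he, hve, rfl⟩ := mem_links.1 h
    refine hI e (res_sub he) ?_
    rw [← Finset.insert_erase hve, Finset.insert_subset_iff]
    exact ⟨hv, hfI⟩

lemma sum_dg_le (hL : Good V τ s K L) : ∑ T ∈ V.powerset, dg L T ≤ L.card * 2 ^ s := by
  unfold dg
  simp only [Finset.card_filter]
  rw [Finset.sum_comm]
  refine (Finset.sum_le_card_nsmul _ _ (2 ^ s) fun e he => ?_).trans (by simp)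
  rw [← Finset.card_filter, ← hL.card e he, ← Finset.card_powerset]
  refine Finset.card_le_card fun T hT => ?_
  simp only [Finset.mem_filter] at hT
  exact Finset.mem_powerset.2 hT.2

lemma res_card (hτ : 0 < τ) (hK : 0 ≤ K) (hH : Good V τ (s + 1) K H) {K' : ℝ} (hL : Good V τ s K' L) :
    (H.card : ℝ) * τ ≤ (res τ s H L).card * τ + K * 2 ^ s * L.card := by
  set TT := V.powerset.filter (fun T => T.Nonempty ∧ Sat τ s L T) with hTT
  have h1 : H ⊆ res τ s H L ∪ TT.biUnion (fun T => H.filter (T ⊆ ·)) := by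
    intro e he
    by_cases hr : e ∈ res τ s H L
    · exact Finset.mem_union_left _ hr
    · apply Finset.mem_union_right
      simp only [res, Finset.mem_filter, not_and, not_forall, not_not] at hr
      obtain ⟨T, hT1, hT2, hT3⟩ := hr he
      rw [Finset.mem_biUnion]
      exact ⟨T, by simp [hTT, hT2, hT3, hT1.trans (hH.sub e he)], by simp [he, hT1]⟩
  have h2 : H.card ≤ (res τ s H L).card + ∑ T ∈ TT, dg H T :=
    (Finset.card_le_card h1).trans ((Finset.card_union_le _ _).trans
      (Nat.add_le_add_left Finset.card_biUnion_le _))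
  have h2' : (H.card : ℝ) ≤ (res τ s H L).card + ∑ T ∈ TT, (dg H T : ℝ) := by exact_mod_cast h2
  have h3 : ∀ T ∈ TT, (dg H T : ℝ) * τ ≤ K * dg L T := by
    intro T hT
    simp only [hTT, Finset.mem_filter] at hT
    have h4 := hH.deg T hT.2.1
    have h5 : τ ^ T.card ≤ (dg L T : ℝ) * τ ^ s := hT.2.2
    have h6 : (dg H T : ℝ) * τ * τ ^ s ≤ K * dg L T * τ ^ s := by
      calc (dg H T : ℝ) * τ * τ ^ s = dg H T * τ ^ (s + 1) := by ring
        _ ≤ K * τ ^ T.card := h4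
        _ ≤ K * (dg L T * τ ^ s) := by gcongr
        _ = _ := by ring
    exact le_of_mul_le_mul_right h6 (by positivity)
  have h4 : (∑ T ∈ TT, (dg H T : ℝ)) * τ ≤ K * (2 ^ s * L.card) := by
    rw [Finset.sum_mul]
    refine (Finset.sum_le_sum h3).trans ?_
    rw [← Finset.mul_sum]
    refine mul_le_mul_of_nonneg_left ?_ hK
    have h5 : ∑ T ∈ TT, dg L T ≤ L.card * 2 ^ s :=
      (Finset.sum_le_sum_of_subset (Finset.filter_subset _ _)).trans (sum_dg_le hL)
    have h5' : ∑ T ∈ TT, (dg L T : ℝ) ≤ L.card * 2 ^ s := by exact_mod_cast h5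
    linarith
  nlinarith

lemma sum_dg_singleton {R : Finset (Finset ℕ)} (hR : ∀ e ∈ R, e ⊆ V) (hne : ∀ e ∈ R, e.Nonempty) :
    R.card ≤ ∑ v ∈ V, dg R {v} := by
  unfold dg
  simp only [Finset.card_filter]
  rw [Finset.sum_comm, Finset.card_eq_sum_ones]
  refine Finset.sum_le_sum fun e he => ?_
  obtain ⟨v, hv⟩ := hne e he
  rw [← Finset.card_filter]
  exact Finset.card_pos.2 ⟨v, by simp [hv, hR e he hv]⟩

lemma U_card (hτ : 0 < τ) (hK : 0 < K) (hH : Good V τ (s + 1) K H) {K' : ℝ} (hL : Good V τ s K' L)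
    {c D : ℝ} (hD : D * τ ^ s ≤ c / 4) (hHc : c * V.card ≤ H.card * τ ^ s) (hs : 0 < s)
    (hLc : K * 2 ^ s * (L.card * τ ^ (s - 1)) ≤ c / 2 * V.card) :
    c / (4 * K) * V.card ≤ (V.filter (fun v => D ≤ dg (res τ s H L) {v})).card := by
  set U := V.filter (fun v => D ≤ dg (res τ s H L) {v}) with hU
  have hts : τ ^ s = τ ^ (s - 1) * τ := by rw [← pow_succ]; congr 1; omega
  have hp : 0 < τ ^ (s - 1) := by positivity
  have h1 : c / 2 * V.card ≤ (res τ s H L).card * τ ^ s := by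
    have := mul_le_mul_of_nonneg_right (res_card hτ hK.le hH hL) hp.le
    rw [hts] at hHc ⊢
    linarith
  have h2 := sum_dg_singleton (R := res τ s H L) (V := V) (fun e he => hH.sub e (res_sub he))
    (fun e he => Finset.card_pos.1 (by rw [hH.card e (res_sub he)]; omega))
  have h2' : ((res τ s H L).card : ℝ) ≤ ∑ v ∈ V, (dg (res τ s H L) {v} : ℝ) := by exact_mod_cast h2
  rw [← Finset.sum_filter_add_sum_filter_not V (fun v => D ≤ dg (res τ s H L) {v})] at h2'
  have hp2 : 0 < τ ^ s := by positivity
  have h3 : (∑ v ∈ U, (dg (res τ s H L) {v} : ℝ)) * τ ^ s ≤ U.card * K := by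
    rw [Finset.sum_mul]
    refine (Finset.sum_le_card_nsmul _ _ K fun v _ => ?_).trans (by simp)
    have h4 := hH.deg {v} (by simp)
    rw [Finset.card_singleton, pow_one, pow_succ, ← mul_assoc] at h4
    have h5 := le_of_mul_le_mul_right h4 hτ
    refine le_trans ?_ h5
    gcongr
    exact dg_mono res_sub _
  have h4 : (∑ v ∈ V.filter (fun v => ¬ D ≤ dg (res τ s H L) {v}), (dg (res τ s H L) {v} : ℝ)) * τ ^ s
      ≤ V.card * (c / 4) := by
    rw [Finset.sum_mul]
    have hc0 : 0 ≤ c / 4 ∨ V.card = 0 := by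
      by_contra! hcon
      have : (0 : ℝ) < V.card := by exact_mod_cast Nat.pos_of_ne_zero hcon.2
      have h6 : (0 : ℝ) ≤ K * 2 ^ s * (L.card * τ ^ (s - 1)) := by positivity
      nlinarith
    rcases hc0 with hc0 | hc0
    · refine (Finset.sum_le_card_nsmul _ _ (c / 4) fun v hv => ?_).trans ?_
      · simp only [Finset.mem_filter, not_le] at hv
        refine le_trans ?_ hD
        gcongr
        exact hv.2.le
      · rw [nsmul_eq_mul]
        gcongr
        exact Finset.filter_subset _ _
    · rw [Finset.card_eq_zero] at hc0
      subst hc0; simp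
  have h5 := mul_le_mul_of_nonneg_right h2' hp2.le
  rw [add_mul] at h5
  have h6 : c / 4 * V.card ≤ U.card * K := by linarith
  rw [div_mul_eq_mul_div, div_le_iff₀ (by positivity)]
  linarith

theorem step (hτ : 0 < τ) (hK : 0 < K) (hs : 0 < s) (hH : Good V τ (s + 1) K H) {c D x q M : ℝ}
    (hq : 0 ≤ q)
    (hD : D * τ ^ s ≤ c / 4) (hHc : c * V.card ≤ H.card * τ ^ s)
    (hx : K * 2 ^ s * x ≤ c / 2) (hM : (1 - c / (4 * K)) * V.card ≤ M)
    (hnext : ∀ L, Good V τ s (K + 1) L → x * V.card ≤ L.card * τ ^ (s - 1) → Cont V (Indep L) q M) :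
    ∀ (N : ℕ) (L : Finset (Finset ℕ)), Good V τ s (K + 1) L →
      x * V.card ≤ (L.card + N * D) * τ ^ (s - 1) →
      Cont V (fun I => Indep H I ∧ Indep L I) (q + N) M := by
  have hp : 0 < τ ^ (s - 1) := by positivity
  intro N
  induction N with
  | zero =>
    intro L hL h
    exact (hnext L hL (by simpa using h)).mono (fun I h => h.2) (by simp) le_rfl
  | succ N ih =>
    intro L hL h
    by_cases hbig : x * V.card ≤ L.card * τ ^ (s - 1)
    · exact (hnext L hL hbig).mono (fun I h => h.2) (by
        have : (0 : ℝ) ≤ ((N + 1 : ℕ) : ℝ) := by positivity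
        linarith) le_rfl
    push Not at hbig
    set U := V.filter (fun v => D ≤ dg (res τ s H L) {v}) with hU
    have hUc : c / (4 * K) * V.card ≤ U.card := U_card hτ hK hH hL hD hHc hs (by
      have := mul_le_mul_of_nonneg_left hbig.le (show (0:ℝ) ≤ K * 2 ^ s by positivity)
      refine this.trans ?_
      rw [← mul_assoc]
      exact mul_le_mul_of_nonneg_right hx (by positivity))
    have hv : ∀ v, ∃ f g : Finset ℕ → Finset ℕ, v ∈ U → ∀ I ⊆ V,
        (Indep H I ∧ Indep (L ∪ links τ s H L v) I) → f I ⊆ I ∧ I ⊆ g I ∧ g I ⊆ V ∧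
        ((f I).card : ℝ) ≤ q + N ∧ ((g I).card : ℝ) ≤ M ∧
        ∀ I', f I ⊆ I' → I' ⊆ I → f I' = f I ∧ g I' = g I := by
      intro v
      by_cases hvU : v ∈ U
      · obtain ⟨f, g, hfg⟩ := ih (L ∪ links τ s H L v) (good_union hτ hH hL v) (by
          refine h.trans ?_
          refine mul_le_mul_of_nonneg_right ?_ (by positivity)
          have h1 : (L ∪ links τ s H L v).card = L.card + dg (res τ s H L) {v} := by
            rw [Finset.card_union_of_disjoint (links_disj hτ hs hH v), card_links]
          have h2 : D ≤ dg (res τ s H L) {v} := (Finset.mem_filter.1 hvU).2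
          rw [h1]
          push_cast
          linarith)
        exact ⟨f, g, fun _ => hfg⟩
      · exact ⟨id, id, fun h => absurd h hvU⟩
    choose f g hfg using hv
    set pk : Finset ℕ → ℕ := fun I => if h : (I ∩ U).Nonempty then (I ∩ U).min' h else 0 with hpk
    refine ⟨fun I => if (I ∩ U).Nonempty then insert (pk I) (f (pk I) I) else ∅,
      fun I => if (I ∩ U).Nonempty then g (pk I) I else V \ U, ?_⟩
    rintro I hI ⟨hIH, hIL⟩
    by_cases hne : (I ∩ U).Nonempty
    · have hpm : pk I ∈ I ∩ U := by
        simp only [hpk, dif_pos hne]; exact Finset.min'_mem _ _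
      obtain ⟨hp1, hp2⟩ := Finset.mem_inter.1 hpm
      obtain ⟨h1, h2, h3, h4, h5, h6⟩ := hfg (pk I) hp2 I hI ⟨hIH, indep_links hp1 hIH hIL⟩
      simp only [if_pos hne]
      refine ⟨Finset.insert_subset_iff.2 ⟨hp1, h1⟩, h2, h3, ?_, h5, ?_⟩
      · have := Finset.card_insert_le (pk I) (f (pk I) I)
        have : ((insert (pk I) (f (pk I) I)).card : ℝ) ≤ (f (pk I) I).card + 1 := by exact_mod_cast this
        push_cast; linarith
      · intro I' hI1 hI2
        obtain ⟨hI3, hI4⟩ := Finset.insert_subset_iff.1 hI1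
        have hne' : (I' ∩ U).Nonempty := ⟨pk I, Finset.mem_inter.2 ⟨hI3, hp2⟩⟩
        have hpk' : pk I' = pk I := by
          apply le_antisymm
          · simp only [hpk, dif_pos hne']
            rw [dif_pos hne]
            apply Finset.min'_le
            have : (I ∩ U).min' hne = pk I := by simp only [hpk, dif_pos hne]
            rw [this]
            exact Finset.mem_inter.2 ⟨hI3, hp2⟩
          · simp only [hpk, dif_pos hne', dif_pos hne]
            exact Finset.min'_le _ _ (Finset.inter_subset_inter hI2 (Finset.Subset.refl _) (Finset.min'_mem _ hne'))
        rw [if_pos hne', if_pos hne', hpk']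
        obtain ⟨h7, h8⟩ := h6 I' hI4 hI2
        rw [h7, h8]
        exact ⟨rfl, rfl⟩
    · simp only [if_neg hne]
      refine ⟨by simp, ?_, Finset.sdiff_subset, by simp; positivity, ?_, ?_⟩
      · intro v hv
        refine Finset.mem_sdiff.2 ⟨hI hv, fun hvU => hne ⟨v, Finset.mem_inter.2 ⟨hv, hvU⟩⟩⟩
      · rw [Finset.cast_card_sdiff (Finset.filter_subset _ _)]
        rw [sub_mul] at hM
        linarith
      · intro I' _ hI2
        have : ¬ (I' ∩ U).Nonempty := fun h => hne (h.mono (Finset.inter_subset_inter hI2 (Finset.Subset.refl _)))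
        simp [if_neg this]

end step

theorem containers (s : ℕ) : ∀ (K c : ℝ), 0 < K → 0 < c → ∃ C η : ℝ, 0 ≤ C ∧ 0 < η ∧
    ∀ (V : Finset ℕ) (τ : ℝ) (H : Finset (Finset ℕ)), 0 < τ → 1 ≤ V.card * τ → Good V τ (s + 1) K H →
      c * V.card ≤ H.card * τ ^ s → Cont V (Indep H) (C * (V.card * τ)) ((1 - η) * V.card) := by
  induction s with
  | zero =>
    intro K c hK hc
    refine ⟨0, c, le_rfl, hc, fun V τ H hτ _ hH hHc => ?_⟩
    set U := V.filter (fun v => {v} ∈ H) with hU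
    refine ⟨fun _ => ∅, fun _ => V \ U, fun I hI hIH => ⟨by simp, ?_, Finset.sdiff_subset, by simp, ?_, fun _ _ _ => ⟨rfl, rfl⟩⟩⟩
    · intro v hv
      refine Finset.mem_sdiff.2 ⟨hI hv, fun hvU => ?_⟩
      exact hIH {v} (Finset.mem_filter.1 hvU).2 (by simpa using hv)
    · have h1 : H.card ≤ U.card := by
        have : H ⊆ U.image (fun v => {v}) := by
          intro e he
          obtain ⟨v, rfl⟩ := Finset.card_eq_one.1 (hH.card e he)
          refine Finset.mem_image.2 ⟨v, ?_, rfl⟩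
          simp [hU, he]
          simpa using hH.sub _ he
        exact (Finset.card_le_card this).trans Finset.card_image_le
      have h1' : (H.card : ℝ) ≤ U.card := by exact_mod_cast h1
      rw [Finset.cast_card_sdiff (Finset.filter_subset _ _)]
      simp at hHc
      linarith
  | succ s ih =>
    intro K c hK hc
    set x := c / (2 * (K * 2 ^ (s + 1))) with hx
    have hx0 : 0 < x := by positivity
    obtain ⟨C, η, hC, hη, h⟩ := ih (K + 1) x (by positivity) hx0
    refine ⟨C + (4 * x / c + 1), min η (c / (4 * K)), by positivity, by positivity, ?_⟩
    intro V τ H hτ hV hH hHc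
    set D := c / 4 / τ ^ (s + 1) with hD
    have hD0 : 0 < D := by positivity
    set N := ⌈4 * x / c * (V.card * τ)⌉₊ with hN
    have hN1 : 4 * x / c * (V.card * τ) ≤ N := Nat.le_ceil _
    have hN2 : (N : ℝ) < 4 * x / c * (V.card * τ) + 1 := Nat.ceil_lt_add_one (by positivity)
    have hVc : (0 : ℝ) ≤ V.card := by positivity
    have hst := step (τ := τ) (s := s + 1) (H := H) (V := V) (K := K) hτ hK (by omega) hH
      (c := c) (D := D) (x := x) (q := C * (V.card * τ)) (M := (1 - min η (c / (4 * K))) * V.card)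
      (by positivity) (by rw [hD]; field_simp; rfl) hHc (by rw [hx]; field_simp; rfl)
      (by gcongr; exact min_le_right _ _) (fun L hL hLc => by
        refine (h V τ L hτ hV hL hLc).mono (fun _ h => h) le_rfl ?_
        gcongr; exact min_le_left _ _) N ∅ ⟨by simp, by simp, by
          intro T _; simp [dg]; positivity⟩ (by
          simp only [Finset.card_empty, Nat.cast_zero, zero_add, Nat.add_sub_cancel]
          calc x * V.card = (4 * x / c * (V.card * τ)) * D * τ ^ s := by
                rw [hD]; field_simp; ring
            _ ≤ N * D * τ ^ s := by gcongr)
    refine hst.mono (fun I hI => ⟨hI, by simp [Indep]⟩) ?_ le_rfl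
    have : 4 * x / c * (V.card * τ) + 1 ≤ (4 * x / c + 1) * (V.card * τ) := by
      rw [add_mul]; linarith
    linarith
end SzR

namespace SzR
open Finset

def apset (k a d : ℕ) : Finset ℕ := (range k).image (fun i => a + i * d)

lemma mem_apset {k a d x : ℕ} : x ∈ apset k a d ↔ ∃ i < k, a + i * d = x := by
  simp [apset]

noncomputable def apH (k n : ℕ) (X : Finset ℕ) : Finset (Finset ℕ) :=
  (APs k n X).image (fun p => apset k p.1 p.2)

def APFree (k : ℕ) (I : Finset ℕ) : Prop := ∀ a d : ℕ, 0 < a → 0 < d → ¬ ∀ i < k, a + i * d ∈ I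

lemma mem_APs {k n : ℕ} {X : Finset ℕ} {p : ℕ × ℕ} :
    p ∈ APs k n X ↔ ((1 ≤ p.1 ∧ p.1 ≤ n) ∧ (1 ≤ p.2 ∧ p.2 ≤ n)) ∧ ∀ i < k, p.1 + i * p.2 ∈ X := by
  simp [APs]

lemma apset_le {k a d a' d' : ℕ} (hk : 2 ≤ k) (h : apset k a d = apset k a' d') : a' ≤ a := by
  have : a ∈ apset k a' d' := by rw [← h]; exact mem_apset.2 ⟨0, by omega, by simp⟩
  obtain ⟨i, _, hi⟩ := mem_apset.1 this
  rw [← hi]; exact Nat.le_add_right _ _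

lemma apset_le2 {k a d d' : ℕ} (hk : 2 ≤ k) (hd : 0 < d) (h : apset k a d = apset k a d') : d' ≤ d := by
  have : a + d ∈ apset k a d' := by rw [← h]; exact mem_apset.2 ⟨1, by omega, by simp⟩
  obtain ⟨i, _, hi⟩ := mem_apset.1 this
  have h1 : i * d' = d := by omega
  have h2 : 0 < i := by
    rcases Nat.eq_zero_or_pos i with h | h
    · subst h; simp at h1; omega
    · exact h
  rw [← h1]; exact Nat.le_mul_of_pos_left _ h2

lemma apH_card {k n : ℕ} (hk : 2 ≤ k) (X : Finset ℕ) : (apH k n X).card = (APs k n X).card := by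
  unfold apH
  refine card_image_of_injOn ?_
  rintro ⟨a, d⟩ h ⟨a', d'⟩ h' he
  have h := (mem_APs.1 (mem_coe.1 h)).1
  have h' := (mem_APs.1 (mem_coe.1 h')).1
  simp only at he h h'
  have ha : a = a' := le_antisymm (apset_le hk he.symm) (apset_le hk he)
  subst ha
  have hd : d = d' := le_antisymm (apset_le2 hk (by omega) he.symm) (apset_le2 hk (by omega) he)
  rw [hd]

lemma dg_le {k n : ℕ} (X T : Finset ℕ) :
    dg (apH k n X) T ≤ ((APs k n X).filter (fun p => T ⊆ apset k p.1 p.2)).card := by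
  unfold dg apH
  rw [filter_image]
  exact card_image_le

lemma dg_one {k n : ℕ} (X : Finset ℕ) (v : ℕ) : dg (apH k n X) {v} ≤ k * n := by
  refine (dg_le X _).trans ?_
  have : (APs k n X).filter (fun p => {v} ⊆ apset k p.1 p.2) ⊆
      (range k ×ˢ Icc 1 n).image (fun q => (v - q.1 * q.2, q.2)) := by
    rintro ⟨a, d⟩ h
    obtain ⟨h1, h2⟩ := mem_filter.1 h
    have h1 := (mem_APs.1 h1).1
    simp only [singleton_subset_iff] at h2
    obtain ⟨i, hi, hv⟩ := mem_apset.1 h2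
    refine mem_image.2 ⟨(i, d), by simp at h1 ⊢; omega, ?_⟩
    simp only [Prod.mk.injEq, and_true]; omega
  refine (card_le_card this).trans (card_image_le.trans ?_)
  simp

lemma dg_two {k n : ℕ} (X : Finset ℕ) {T : Finset ℕ} {x y : ℕ} (hx : x ∈ T) (hy : y ∈ T) (hxy : x < y) :
    dg (apH k n X) T ≤ k * k := by
  refine (dg_le X _).trans ?_
  have : (APs k n X).filter (fun p => T ⊆ apset k p.1 p.2) ⊆
      (range k ×ˢ range k).image (fun q => (x - q.1 * ((y - x) / (q.2 - q.1)), (y - x) / (q.2 - q.1))) := by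
    rintro ⟨a, d⟩ h
    obtain ⟨h1, h2⟩ := mem_filter.1 h
    have h1 := (mem_APs.1 h1).1
    obtain ⟨i, hi, hv⟩ := mem_apset.1 (h2 hx)
    obtain ⟨j, hj, hw⟩ := mem_apset.1 (h2 hy)
    simp only at hv hw h1
    have hij : i < j := by
      by_contra hc
      have := Nat.mul_le_mul_right d (not_lt.1 hc)
      omega
    have hd : (y - x) / (j - i) = d := by
      have : y - x = d * (j - i) := by
        obtain ⟨l, rfl⟩ := Nat.exists_eq_add_of_lt hij
        have : i + l + 1 - i = l + 1 := by omega
        rw [this, ← hv, ← hw]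
        have : a + (i + l + 1) * d = a + i * d + d * (l + 1) := by ring
        omega
      rw [this, Nat.mul_div_cancel _ (by omega)]
    refine mem_image.2 ⟨(i, j), by simp; omega, ?_⟩
    simp only [hd, Prod.mk.injEq, and_true]; omega
  refine (card_le_card this).trans (card_image_le.trans ?_)
  simp

lemma apH_good {k n : ℕ} (hk : 2 ≤ k) (X : Finset ℕ) {τ : ℝ} (hτ : 0 < τ) (hτ1 : τ ≤ 1)
    (hn : n * τ ^ (k - 1) = 1) : Good X τ k ((k : ℝ) * k) (apH k n X) := by
  have hcard : ∀ e ∈ apH k n X, e.card = k := by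
    intro e he
    obtain ⟨⟨a, d⟩, hp, rfl⟩ := mem_image.1 he
    have hp := (mem_APs.1 hp).1
    simp only [apset] at hp ⊢
    rw [card_image_of_injective, card_range]
    intro i j hij
    simp only [add_right_inj] at hij
    exact Nat.eq_of_mul_eq_mul_right (by omega) hij
  refine ⟨?_, hcard, ?_⟩
  · intro e he
    obtain ⟨⟨a, d⟩, hp, rfl⟩ := mem_image.1 he
    intro x hx
    obtain ⟨i, hi, rfl⟩ := mem_apset.1 hx
    exact (mem_APs.1 hp).2 i hi
  · intro T hT
    have hk1 : (1 : ℝ) ≤ k := by exact_mod_cast (by omega : 1 ≤ k)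
    rcases Nat.eq_zero_or_pos (dg (apH k n X) T) with h0 | h0
    · rw [h0]; simp; positivity
    obtain ⟨e, he⟩ := card_pos.1 h0
    obtain ⟨he1, he2⟩ := mem_filter.1 he
    have hTk : T.card ≤ k := by rw [← hcard e he1]; exact card_le_card he2
    by_cases h1 : T.card = 1
    · obtain ⟨v, rfl⟩ := card_eq_one.1 h1
      have h2 : (dg (apH k n X) {v} : ℝ) ≤ k * n := by exact_mod_cast dg_one X v
      have h3 : τ ^ k = τ ^ (k - 1) * τ := by rw [← pow_succ]; congr 1; omega
      calc (dg (apH k n X) {v} : ℝ) * τ ^ k ≤ k * n * τ ^ k := by gcongr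
        _ = k * (n * τ ^ (k - 1)) * τ := by rw [h3]; ring
        _ = k * τ := by rw [hn]; ring
        _ ≤ k * k * τ ^ (({v} : Finset ℕ).card) := by
          simp only [card_singleton, pow_one]
          nlinarith [mul_pos hτ (by linarith : (0:ℝ) < k), mul_nonneg (mul_pos hτ (by linarith : (0:ℝ) < k)).le (sub_nonneg.2 hk1)]
    · have h2 : 1 < T.card := by have := hT.card_pos; omega
      obtain ⟨x, hx, y, hy, hxy⟩ := one_lt_card.1 h2
      have h3 : dg (apH k n X) T ≤ k * k := by
        rcases lt_or_gt_of_ne hxy with h | h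
        · exact dg_two X hx hy h
        · exact dg_two X hy hx h
      have h3' : (dg (apH k n X) T : ℝ) ≤ k * k := by exact_mod_cast h3
      have h4 : τ ^ k ≤ τ ^ T.card := pow_le_pow_of_le_one hτ.le hτ1 hTk
      gcongr

lemma indep_of_free {k n : ℕ} {X I : Finset ℕ} (h : APFree k I) : Indep (apH k n X) I := by
  intro e he hI
  obtain ⟨⟨a, d⟩, hp, rfl⟩ := mem_image.1 he
  have hp := (mem_APs.1 hp).1
  simp only at hp
  exact h a d (by omega) (by omega) fun i hi => hI (mem_apset.2 ⟨i, hi, rfl⟩)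

theorem ap_containers (k : ℕ) (hk : 2 ≤ k) {ε : ℝ} (hε : 0 < ε) : ∃ C : ℝ, 0 ≤ C ∧ ∃ n₀ : ℕ, ∀ n ≥ n₀,
    ∀ τ : ℝ, 0 < τ → τ ≤ 1 → n * τ ^ (k - 1) = 1 → 1 ≤ ε * n * τ →
      Cont (Icc 1 n) (APFree k) (C * (n * τ)) (ε * n) := by
  obtain ⟨c, hc, n₀, hsup⟩ := supersat k hk hε
  obtain ⟨C, η, hC, hη, hcont⟩ := containers (k - 1) ((k : ℝ) * k) c
    (by have : (0 : ℝ) < k := by exact_mod_cast (by omega : 0 < k)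
        positivity) hc
  rw [show k - 1 + 1 = k by omega] at hcont
  set r := max (1 - η) (1 / 2) with hr
  have hr0 : 0 < r := lt_of_lt_of_le (by norm_num) (le_max_right _ _)
  have hr1 : r < 1 := max_lt (by linarith) (by norm_num)
  obtain ⟨J, hJ⟩ := exists_pow_lt_of_lt_one hε hr1
  refine ⟨J * C, by positivity, n₀, fun n hn τ hτ hτ1 hnτ hεn => ?_⟩
  have key : ∀ (j : ℕ) (X : Finset ℕ), X ⊆ Icc 1 n → X.card * r ^ j ≤ ε * n →
      Cont X (APFree k) (j * C * (n * τ)) (ε * n) := by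
    intro j
    induction j with
    | zero =>
      intro X _ hX
      refine ⟨fun _ => ∅, fun _ => X, fun I hI _ => ⟨by simp, hI, Subset.refl _, by simp, by simpa using hX, fun _ _ _ => ⟨rfl, rfl⟩⟩⟩
    | succ j ih =>
      intro X hXn hX
      by_cases hsm : (X.card : ℝ) ≤ ε * n
      · exact ⟨fun _ => ∅, fun _ => X, fun I hI _ => ⟨by simp, hI, Subset.refl _, by simp; positivity, hsm, fun _ _ _ => ⟨rfl, rfl⟩⟩⟩
      push Not at hsm
      have hXle : (X.card : ℝ) ≤ n := by
        have := card_le_card hXn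
        simp at this
        exact_mod_cast this
      obtain ⟨f1, g1, h1⟩ := hcont X τ (apH k n X) hτ
        (hεn.trans (by gcongr)) (apH_good hk X hτ hτ1 hnτ) (by
          rw [apH_card hk]
          have := hsup n hn X hXn hsm.le
          calc c * X.card ≤ c * n := by gcongr
            _ = c * n * (n * τ ^ (k - 1)) := by rw [hnτ, mul_one]
            _ = c * n ^ 2 * τ ^ (k - 1) := by ring
            _ ≤ _ := by gcongr)
      have hY : ∀ Y : Finset ℕ, ∃ f g : Finset ℕ → Finset ℕ, Y ⊆ Icc 1 n → Y.card * r ^ j ≤ ε * n →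
          ∀ I ⊆ Y, APFree k I → f I ⊆ I ∧ I ⊆ g I ∧ g I ⊆ Y ∧ ((f I).card : ℝ) ≤ j * C * (n * τ) ∧
          ((g I).card : ℝ) ≤ ε * n ∧ ∀ I', f I ⊆ I' → I' ⊆ I → f I' = f I ∧ g I' = g I := by
        intro Y
        by_cases h : Y ⊆ Icc 1 n ∧ Y.card * r ^ j ≤ ε * n
        · obtain ⟨f, g, hfg⟩ := ih Y h.1 h.2
          exact ⟨f, g, fun _ _ => hfg⟩
        · exact ⟨id, id, fun a b => absurd ⟨a, b⟩ h⟩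
      choose f2 g2 h2 using hY
      refine ⟨fun I => f1 I ∪ f2 (g1 I) I, fun I => g2 (g1 I) I, fun I hI hfree => ?_⟩
      obtain ⟨a1, a2, a3, a4, a5, a6⟩ := h1 I hI (indep_of_free hfree)
      obtain ⟨b1, b2, b3, b4, b5, b6⟩ := h2 (g1 I) (a3.trans hXn) (by
        have : ((g1 I).card : ℝ) ≤ r * X.card := a5.trans (by gcongr; exact le_max_left _ _)
        calc ((g1 I).card : ℝ) * r ^ j ≤ r * X.card * r ^ j := by gcongr
          _ = X.card * r ^ (j + 1) := by ring
          _ ≤ _ := hX) I a2 hfree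
      refine ⟨union_subset a1 b1, b2, b3.trans a3, ?_, b5, ?_⟩
      · have : ((f1 I ∪ f2 (g1 I) I).card : ℝ) ≤ (f1 I).card + (f2 (g1 I) I).card := by
          exact_mod_cast card_union_le _ _
        have : C * (X.card * τ) ≤ C * (n * τ) := by gcongr
        push_cast
        linarith
      · intro I' hI1 hI2
        obtain ⟨c1, c2⟩ := a6 I' (subset_union_left.trans hI1) hI2
        obtain ⟨d1, d2⟩ := b6 I' (subset_union_right.trans hI1) hI2
        simp only [c1, c2, d1, d2, and_self]
  refine key J (Icc 1 n) (Subset.refl _) ?_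
  simp only [Nat.card_Icc, Nat.add_sub_cancel]
  rw [mul_comm]
  gcongr
end SzR

namespace SzR
open Finset

noncomputable def wt (n : ℕ) (p : ℝ) (S : Finset ℕ) : ℝ := p ^ S.card * (1 - p) ^ (n - S.card)

lemma wt_nonneg {n : ℕ} {p : ℝ} (h0 : 0 ≤ p) (h1 : p ≤ 1) (S : Finset ℕ) : 0 ≤ wt n p S := by
  have : 0 ≤ 1 - p := by linarith
  unfold wt; positivity

lemma sum_wt (n : ℕ) (p : ℝ) : ∑ S ∈ (Icc 1 n).powerset, wt n p S = 1 := by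
  have := sum_pow_mul_eq_add_pow p (1 - p) (Icc 1 n)
  simpa [wt] using this

/-- Lower tail. -/
lemma lower_tail {n : ℕ} {p : ℝ} (h0 : 0 ≤ p) (h1 : p ≤ 1) :
    ∑ S ∈ (Icc 1 n).powerset, (if (S.card : ℝ) < p * n / 2 then wt n p S else 0) ≤
      Real.exp (-(p * n) / 8) := by
  have hq : 0 ≤ 1 - p := by linarith
  have hl : Real.log 2 < 3 / 4 := by have := Real.log_two_lt_d9; linarith
  have hl0 : 0 < Real.log 2 := Real.log_pos (by norm_num)
  calc _ ≤ ∑ S ∈ (Icc 1 n).powerset, Real.exp (Real.log 2 * (p * n / 2)) *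
        ((p / 2) ^ S.card * (1 - p) ^ ((Icc 1 n).card - S.card)) := by
        refine sum_le_sum fun S _ => ?_
        simp only [Nat.card_Icc, Nat.add_sub_cancel]
        have he : (p / 2) ^ S.card = Real.exp (-(Real.log 2 * S.card)) * p ^ S.card := by
          rw [Real.exp_neg, mul_comm (Real.log 2), Real.exp_nat_mul, Real.exp_log (by norm_num), div_pow]
          field_simp
        rw [he, mul_assoc, ← mul_assoc (Real.exp _), ← Real.exp_add]
        have hw := wt_nonneg h0 h1 S (n := n)
        split_ifs with h
        · refine le_mul_of_one_le_left hw (Real.one_le_exp ?_)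
          nlinarith
        · exact mul_nonneg (Real.exp_pos _).le hw
    _ = Real.exp (Real.log 2 * (p * n / 2)) * (1 + -(p / 2)) ^ n := by
        rw [← mul_sum, sum_pow_mul_eq_add_pow]
        simp only [Nat.card_Icc, Nat.add_sub_cancel]
        congr 2; ring
    _ ≤ Real.exp (Real.log 2 * (p * n / 2)) * Real.exp (-(p / 2)) ^ n := by
        have : 0 ≤ 1 + -(p / 2) := by linarith
        gcongr
        have := Real.add_one_le_exp (-(p / 2)); linarith
    _ ≤ _ := by
        rw [← Real.exp_nat_mul, ← Real.exp_add]
        refine Real.exp_le_exp.2 ?_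
        have : 0 ≤ p * n := by positivity
        nlinarith

/-- Upper tail relative to a fingerprint. -/
lemma upper_tail {n : ℕ} {p l m : ℝ} (h0 : 0 ≤ p) (h1 : p ≤ 1) (hl : 0 ≤ l) {F G : Finset ℕ} (hF : F ⊆ Icc 1 n)  :
    ∑ S ∈ (Icc 1 n).powerset, (if F ⊆ S ∧ m ≤ ((S ∩ (G \ F)).card : ℝ) then wt n p S else 0) ≤
      p ^ F.card * Real.exp (p * G.card * Real.exp l - l * m) := by
  have hq : 0 ≤ 1 - p := by linarith
  set h : ℕ → ℝ := fun i => if i ∈ G \ F then Real.exp l else 1 with hh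
  have hhpos : ∀ i, 0 ≤ h i := fun i => by simp only [hh]; split_ifs <;> positivity
  set u : ℕ → ℝ := fun i => if i ∈ F then 0 else 1 - p with hu
  have hupos : ∀ i, 0 ≤ u i := fun i => by simp only [hu]; split_ifs <;> linarith
  calc _ ≤ ∑ S ∈ (Icc 1 n).powerset, Real.exp (-(l * m)) *
        ((∏ i ∈ S, p * h i) * ∏ i ∈ Icc 1 n \ S, u i) := by
        refine sum_le_sum fun S hS => ?_
        rw [mem_powerset] at hS
        have hnn : 0 ≤ (∏ i ∈ S, p * h i) * ∏ i ∈ Icc 1 n \ S, u i :=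
          mul_nonneg (prod_nonneg fun i _ => mul_nonneg h0 (hhpos i)) (prod_nonneg fun i _ => hupos i)
        split_ifs with hc
        · have e1 : ∏ i ∈ Icc 1 n \ S, u i = (1 - p) ^ (n - S.card) := by
            rw [prod_congr rfl (g := fun _ => 1 - p), prod_const, card_sdiff_of_subset hS]
            · simp
            · intro i hi
              simp only [hu]; rw [if_neg]
              exact fun hiF => (mem_sdiff.1 hi).2 (hc.1 hiF)
          have e2 : ∏ i ∈ S, p * h i = p ^ S.card * Real.exp (l * (S ∩ (G \ F)).card) := by
            rw [prod_mul_distrib, prod_const]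
            congr 1
            simp only [hh]
            rw [prod_ite_mem, prod_const, mul_comm l, Real.exp_nat_mul]
          rw [e1, e2]
          have : Real.exp (-(l * m)) * (p ^ S.card * Real.exp (l * (S ∩ (G \ F)).card) * (1 - p) ^ (n - S.card))
            = Real.exp (-(l * m) + l * (S ∩ (G \ F)).card) * wt n p S := by
            rw [Real.exp_add, wt]; ring
          rw [this]
          refine le_mul_of_one_le_left (wt_nonneg h0 h1 S) (Real.one_le_exp ?_)
          nlinarith [hc.2]
        · exact mul_nonneg (Real.exp_pos _).le hnn
    _ = Real.exp (-(l * m)) * ∏ i ∈ Icc 1 n, (p * h i + u i) := by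
        rw [← mul_sum, prod_add]
    _ ≤ Real.exp (-(l * m)) * ∏ i ∈ Icc 1 n, ((if i ∈ F then p else 1) *
          (if i ∈ G then Real.exp (p * Real.exp l) else 1)) := by
        refine mul_le_mul_of_nonneg_left (prod_le_prod (fun i _ => add_nonneg (mul_nonneg h0 (hhpos i)) (hupos i)) ?_) (Real.exp_pos _).le
        intro i _
        have hE : 1 ≤ Real.exp (p * Real.exp l) := Real.one_le_exp (by positivity)
        simp only [hh, hu, mem_sdiff]
        by_cases hiF : i ∈ F
        · by_cases hiG : i ∈ G
          · simp [hiF, hiG]; exact le_mul_of_one_le_right h0 hE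
          · simp [hiF, hiG]
        · by_cases hiG : i ∈ G
          · simp [hiF, hiG]
            have := Real.add_one_le_exp (p * Real.exp l)
            linarith
          · simp [hiF, hiG]
    _ = Real.exp (-(l * m)) * (p ^ F.card * Real.exp (p * Real.exp l) ^ (Icc 1 n ∩ G).card) := by
        rw [prod_mul_distrib, prod_ite_mem, prod_ite_mem, prod_const, prod_const, inter_eq_right.2 hF]
    _ ≤ Real.exp (-(l * m)) * (p ^ F.card * Real.exp (p * Real.exp l) ^ G.card) := by
        have hE : 1 ≤ Real.exp (p * Real.exp l) := Real.one_le_exp (by positivity)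
        gcongr
        exact inter_subset_right
    _ = _ := by
        rw [← Real.exp_nat_mul, sub_eq_add_neg, Real.exp_add]
        rw [show (G.card : ℝ) * (p * Real.exp l) = p * G.card * Real.exp l by ring]; ring

lemma sum_small {n : ℕ} {p q : ℝ} (h0 : 0 ≤ p) :
    ∑ F ∈ (Icc 1 n).powerset, (if (F.card : ℝ) ≤ q then p ^ F.card else 0) ≤ Real.exp (2 * q + p * n / 4) := by
  have h4 : Real.exp (-2) ≤ 1 / 4 := by
    have h : (2 : ℝ) ≤ Real.exp 1 := by have := Real.add_one_le_exp (1 : ℝ); linarith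
    rw [Real.exp_neg, show (2 : ℝ) = 1 + 1 by norm_num, Real.exp_add, inv_le_comm₀ (by positivity) (by norm_num)]
    nlinarith
  calc _ ≤ ∑ F ∈ (Icc 1 n).powerset, Real.exp (2 * q) * ((p * Real.exp (-2)) ^ F.card * 1 ^ ((Icc 1 n).card - F.card)) := by
        refine sum_le_sum fun F _ => ?_
        rw [one_pow, mul_one, mul_pow, ← Real.exp_nat_mul, mul_left_comm, ← Real.exp_add]
        split_ifs with h
        · refine le_mul_of_one_le_right (by positivity) (Real.one_le_exp (by linarith))
        · positivity
    _ = Real.exp (2 * q) * (p * Real.exp (-2) + 1) ^ n := by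
        rw [← mul_sum, sum_pow_mul_eq_add_pow]; simp
    _ ≤ Real.exp (2 * q) * Real.exp (p / 4) ^ n := by
        gcongr
        have := Real.add_one_le_exp (p / 4)
        nlinarith
    _ = _ := by
        rw [← Real.exp_nat_mul, ← Real.exp_add]; congr 1; ring

lemma bad_bound {n k : ℕ} {p δ q ε : ℝ} (h0 : 0 ≤ p) (h1 : p ≤ 1) (hδ : 0 < δ) (hδ1 : δ < 1)
    (hε : ε = Real.exp (-(4 / δ)) / 4) (hq : q ≤ δ * (p * n) / 8)
    (hc : Cont (Icc 1 n) (APFree k) q (ε * n)) :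
    ∑ S ∈ (Icc 1 n).powerset, (if IsSzemeredi δ k S then 0 else wt n p S) ≤
      2 * Real.exp (-(p * n) / 8) := by
  obtain ⟨f, g, hfg⟩ := hc
  have hpn : 0 ≤ p * n := by positivity
  set m := δ * (p * n) / 4 with hm
  have hcover : ∀ S ∈ (Icc 1 n).powerset, (if IsSzemeredi δ k S then 0 else wt n p S) ≤
      (if (S.card : ℝ) < p * n / 2 then wt n p S else 0) +
      ∑ F ∈ (Icc 1 n).powerset, (if (F.card : ℝ) ≤ q ∧ ((g F).card : ℝ) ≤ ε * n then
        (if F ⊆ S ∧ m ≤ ((S ∩ (g F \ F)).card : ℝ) then wt n p S else 0) else 0) := by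
    intro S hS
    rw [mem_powerset] at hS
    have hw := wt_nonneg h0 h1 S (n := n)
    have hnn : ∀ F ∈ (Icc 1 n).powerset, 0 ≤ (if (F.card : ℝ) ≤ q ∧ ((g F).card : ℝ) ≤ ε * n then
        (if F ⊆ S ∧ m ≤ ((S ∩ (g F \ F)).card : ℝ) then wt n p S else 0) else 0) := by
      intro F _; split_ifs <;> first | exact hw | exact le_rfl
    have hsn := sum_nonneg hnn
    by_cases hb : IsSzemeredi δ k S
    · rw [if_pos hb]
      refine add_nonneg ?_ hsn
      split_ifs <;> first | exact hw | exact le_rfl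
    rw [if_neg hb]
    by_cases hs : (S.card : ℝ) < p * n / 2
    · rw [if_pos hs]; linarith
    rw [if_neg hs, zero_add]
    unfold IsSzemeredi at hb
    push Not at hb hs
    obtain ⟨B, hBS, hBc, hB⟩ := hb
    have hfree : APFree k B := by
      intro a d ha hd h
      obtain ⟨i, hi, hi'⟩ := hB a d ha hd
      exact hi' (h i hi)
    obtain ⟨a1, a2, a3, a4, a5, a6⟩ := hfg B (hBS.trans hS) hfree
    have hgF : g (f B) = g B := (a6 (f B) (Subset.refl _) a1).2
    have hle := single_le_sum hnn (mem_powerset.2 (a1.trans (hBS.trans hS)))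
    refine le_trans (le_of_eq ?_) hle
    rw [if_pos, if_pos]
    · refine ⟨a1.trans hBS, ?_⟩
      rw [hgF]
      have h2 : B \ f B ⊆ S ∩ (g B \ f B) := by
        intro x hx
        obtain ⟨hx1, hx2⟩ := mem_sdiff.1 hx
        exact mem_inter.2 ⟨hBS hx1, mem_sdiff.2 ⟨a2 hx1, hx2⟩⟩
      have h3 : ((B \ f B).card : ℝ) ≤ (S ∩ (g B \ f B)).card := by exact_mod_cast card_le_card h2
      rw [cast_card_sdiff a1] at h3
      have h4 : δ * (p * n / 2) ≤ δ * S.card := by gcongr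
      have h5 : 0 ≤ δ * (p * n) := by positivity
      rw [hm]
      nlinarith
    · rw [hgF]; exact ⟨a4, a5⟩
  refine (sum_le_sum hcover).trans ?_
  rw [sum_add_distrib, sum_comm, two_mul]
  refine add_le_add (lower_tail h0 h1) ?_
  calc _ ≤ ∑ F ∈ (Icc 1 n).powerset, Real.exp (p * n / 4 - p * n) * (if (F.card : ℝ) ≤ q then p ^ F.card else 0) := by
        refine sum_le_sum fun F hF => ?_
        rw [mem_powerset] at hF
        by_cases hc : (F.card : ℝ) ≤ q ∧ ((g F).card : ℝ) ≤ ε * n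
        · simp only [if_pos hc, if_pos hc.1]
          refine (upper_tail h0 h1 (show 0 ≤ 4 / δ by positivity) hF).trans ?_
          rw [mul_comm]
          refine mul_le_mul_of_nonneg_right (Real.exp_le_exp.2 (sub_le_sub ?_ ?_)) (by positivity)
          · calc p * (g F).card * Real.exp (4 / δ) ≤ p * (ε * n) * Real.exp (4 / δ) := by
                  gcongr; exact hc.2
              _ = p * n / 4 * (Real.exp (-(4 / δ)) * Real.exp (4 / δ)) := by rw [hε]; ring
              _ = p * n / 4 := by rw [← Real.exp_add]; simp
          · rw [hm]
            refine le_of_eq ?_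
            field_simp
        · simp only [if_neg hc, sum_const_zero]
          split_ifs <;> positivity
    _ ≤ Real.exp (p * n / 4 - p * n) * Real.exp (2 * q + p * n / 4) := by
        rw [← mul_sum]
        exact mul_le_mul_of_nonneg_left (sum_small h0) (Real.exp_pos _).le
    _ ≤ _ := by
        rw [← Real.exp_add]
        refine Real.exp_le_exp.2 ?_
        nlinarith

end SzR

/-- Corollary 4.1: a quantitative sparse random version of Szemerédi's theorem. -/
theorem szemeredi_random_sparse_strong (k : ℕ) (hk : 3 ≤ k) (δ : ℝ) (hδ0 : 0 < δ)
    (hδ1 : δ < 1) :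
    ∃ C : ℝ, ∃ n₀ : ℕ, ∀ n : ℕ, n₀ ≤ n → ∀ p : ℝ, 0 ≤ p → p ≤ 1 →
      C * (n : ℝ) ^ (-(1 : ℝ) / ((k : ℝ) - 1)) ≤ p →
      1 - 2 * Real.exp (-(p * (n : ℝ)) / 8) ≤ randomSubsetProb n p (IsSzemeredi δ k) := by
  classical
  set ε := Real.exp (-(4 / δ)) / 4 with hε
  have hε0 : 0 < ε := by positivity
  obtain ⟨C, hC, n₀, hcont⟩ := SzR.ap_containers k (by omega) hε0
  have hkr : (3 : ℝ) ≤ k := by exact_mod_cast hk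
  have hk1 : (0 : ℝ) < (k : ℝ) - 1 := by linarith
  set α : ℝ := -(1 : ℝ) / ((k : ℝ) - 1) with hα
  have hα1 : 0 < 1 + α := by
    rw [hα, neg_div]
    have : 1 / ((k : ℝ) - 1) < 1 := by rw [div_lt_one hk1]; linarith
    linarith
  have hlim : Filter.Tendsto (fun n : ℕ => (n : ℝ) ^ (1 + α)) Filter.atTop Filter.atTop :=
    (tendsto_rpow_atTop hα1).comp tendsto_natCast_atTop_atTop
  obtain ⟨n₁, hn₁⟩ := Filter.eventually_atTop.1 (hlim.eventually_ge_atTop (1 / ε))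
  refine ⟨8 * C / δ, max (max n₀ n₁) 1, fun n hn p hp0 hp1 hp => ?_⟩
  have hn0 : n₀ ≤ n := le_trans (le_trans (le_max_left _ _) (le_max_left _ _)) hn
  have hn1 : n₁ ≤ n := le_trans (le_trans (le_max_right _ _) (le_max_left _ _)) hn
  have hn2 : 1 ≤ n := le_trans (le_max_right _ _) hn
  have hnr : (1 : ℝ) ≤ n := by exact_mod_cast hn2
  have hnpos : (0 : ℝ) < n := by linarith
  set τ : ℝ := (n : ℝ) ^ α with hτ
  have hτ0 : 0 < τ := Real.rpow_pos_of_pos hnpos _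
  have hτ1 : τ ≤ 1 := Real.rpow_le_one_of_one_le_of_nonpos hnr (by
    rw [hα]; exact div_nonpos_of_nonpos_of_nonneg (by norm_num) hk1.le)
  have hnτ : (n : ℝ) * τ ^ (k - 1) = 1 := by
    rw [hτ, ← Real.rpow_natCast, ← Real.rpow_mul hnpos.le]
    have : α * ((k - 1 : ℕ) : ℝ) = -1 := by
      rw [Nat.cast_sub (by omega), hα]
      push_cast
      field_simp
    rw [this, Real.rpow_neg_one]
    field_simp
  have hεn : 1 ≤ ε * n * τ := by
    have h1 := hn₁ n hn1
    rw [Real.rpow_add hnpos, Real.rpow_one] at h1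
    rw [div_le_iff₀ hε0] at h1
    linarith
  have hq : C * (n * τ) ≤ δ * (p * n) / 8 := by
    have h1 : 8 * C / δ * τ * (δ * n / 8) ≤ p * (δ * n / 8) := by gcongr
    have h2 : 8 * C / δ * τ * (δ * n / 8) = C * (n * τ) := by field_simp
    linarith
  have hbad := SzR.bad_bound hp0 hp1 hδ0 hδ1 hε hq (hcont n hn0 τ hτ0 hτ1 hnτ hεn)
  have hsum : randomSubsetProb n p (IsSzemeredi δ k) +
      ∑ S ∈ (Finset.Icc 1 n).powerset, (if IsSzemeredi δ k S then 0 else SzR.wt n p S) = 1 := by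
    rw [← SzR.sum_wt n p, randomSubsetProb, ← Finset.sum_add_distrib]
    refine Finset.sum_congr rfl fun S _ => ?_
    by_cases h : IsSzemeredi δ k S <;> simp [h, SzR.wt]
  linarith
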